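/- Assume the Riemann Hypothesis. There exists an absolute constant C > 0 such that for all real r, x and all σ ∈ [0,1] with r > 1, ln x > 2·(1+σ)·ln r, and √x / r ≥ 2657, there exists ã ∈ [(1 − 2σ′·ln r/(ln x + 2σ′·ln r))², (1 + 2(1+σ)·ln r/(ln x − 2(1+σ)·ln r))²], where σ′ = max(σ, 1−σ), with |N^{ALGV}_{r,σ}(x) − ã·(4x/ln²x)·(ln r − (ln r)/r)| ≤ C·x^{3/4}·r^{1/2}, where N^{ALGV}_{r,σ}(x) = #{(p,q) : p, q prime, r^{σ−1}·√x < p ≤ r^{σ}·√x and x/(r·p) < q ≤ x/p}. -/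

import Mathlib

/-- Prime-pair count of the shifted algorithmic notion: ordered pairs of primes `(p,q)` with
`r^{σ−1}·√x < p ≤ r^{σ}·√x` and `x/(r·p) < q ≤ x/p`. -/
noncomputable def NALGV (r σ x : ℝ) : ℕ :=
  Nat.card {pq : ℕ × ℕ // pq.1.Prime ∧ pq.2.Prime ∧
    r ^ (σ - 1) * Real.sqrt x < (pq.1 : ℝ) ∧ (pq.1 : ℝ) ≤ r ^ σ * Real.sqrt x ∧
    x / (r * (pq.1 : ℝ)) < (pq.2 : ℝ) ∧ (pq.2 : ℝ) ≤ x / (pq.1 : ℝ)}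

noncomputable def gz (n : ℕ) (s : ℂ) : ℂ :=
  (s - 1) * ((n + 1 : ℝ) : ℂ) ^ (-s) + ((n + 2 : ℝ) : ℂ) ^ (1 - s) - ((n + 1 : ℝ) : ℂ) ^ (1 - s)

lemma cpow_diff_bound (N t : ℝ) (hN : 0 < N) (ht : N ≤ t) (s : ℂ) (hs : 0 < s.re) :
    ‖(t : ℂ) ^ (-s) - (N : ℂ) ^ (-s)‖ ≤ ‖s‖ * N ^ (-s.re - 1) * (t - N) := by
  have hs0 : s ≠ 0 := by rintro rfl; simp at hs
  have h := norm_image_sub_le_of_norm_deriv_le_segment' (a := N) (b := t)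
    (f := fun u : ℝ => (u : ℂ) ^ (-s)) (f' := fun u : ℝ => (-s) * (u : ℂ) ^ (-s - 1))
    (C := ‖s‖ * N ^ (-s.re - 1)) ?_ ?_ t ⟨ht, le_rfl⟩
  · exact h
  · intro u hu
    have hu0 : 0 < u := hN.trans_le hu.1
    exact (hasDerivAt_ofReal_cpow_const (x := u) (r := -s) hu0.ne' (neg_ne_zero.2 hs0)).hasDerivWithinAt
  · intro u hu
    have hu0 : 0 < u := hN.trans_le hu.1
    rw [norm_mul, norm_neg, Complex.norm_cpow_eq_rpow_re_of_pos hu0]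
    gcongr ?_ * ?_
    simp only [Complex.sub_re, Complex.neg_re, Complex.one_re]
    exact Real.rpow_le_rpow_of_nonpos hN hu.1 (by linarith)

lemma gz_bound (n : ℕ) (s : ℂ) (hs : 0 < s.re) :
    ‖gz n s‖ ≤ ‖s - 1‖ * ‖s‖ * ((n : ℝ) + 1) ^ (-s.re - 1) := by
  by_cases h1 : s = 1
  · subst h1; simp [gz]
  have hs0 : s ≠ 0 := by rintro rfl; simp at hs
  set N : ℝ := n + 1 with hNdef
  have hN : 0 < N := by positivity
  have h := norm_image_sub_le_of_norm_deriv_le_segment' (a := N) (b := N + 1)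
    (f := fun u : ℝ => (s - 1) * (N : ℂ) ^ (-s) * ((u : ℂ) - N) + (u : ℂ) ^ (1 - s))
    (f' := fun u : ℝ => (s - 1) * (N : ℂ) ^ (-s) + (1 - s) * (u : ℂ) ^ (-s))
    (C := ‖s - 1‖ * ‖s‖ * N ^ (-s.re - 1)) ?_ ?_ (N + 1) ⟨by linarith, le_rfl⟩
  · have e : gz n s = ((s - 1) * (N : ℂ) ^ (-s) * (((N + 1 : ℝ) : ℂ) - N) + ((N + 1 : ℝ) : ℂ) ^ (1 - s))
      - ((s - 1) * (N : ℂ) ^ (-s) * ((N : ℂ) - N) + (N : ℂ) ^ (1 - s)) := by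
      have : (n : ℝ) + 2 = N + 1 := by rw [hNdef]; ring
      rw [gz, this, ← hNdef]
      push_cast; ring
    rw [e]
    refine h.trans (le_of_eq ?_)
    ring
  · intro u hu
    have hu0 : 0 < u := hN.trans_le hu.1
    have h2 := hasDerivAt_ofReal_cpow_const (x := u) (r := 1 - s) hu0.ne' (sub_ne_zero.2 (Ne.symm h1))
    have h3 : HasDerivAt (fun u : ℝ => ((u : ℂ) - N)) 1 u := by
      simpa using (Complex.ofRealCLM.hasDerivAt (x := u)).sub_const (N : ℂ)
    have h4 := ((h3.const_mul ((s - 1) * (N : ℂ) ^ (-s))).add h2).hasDerivWithinAt (s := Set.Icc N (N + 1))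
    refine h4.congr_deriv ?_
    rw [show (1 - s - 1) = -s by ring]; ring
  · intro u hu
    have hu0 : 0 < u := hN.trans_le hu.1
    have := cpow_diff_bound N u hN hu.1 s hs
    have e : (s - 1) * (N : ℂ) ^ (-s) + (1 - s) * (u : ℂ) ^ (-s)
      = -((s - 1) * ((u : ℂ) ^ (-s) - (N : ℂ) ^ (-s))) := by ring
    rw [e, norm_neg, norm_mul, mul_assoc]
    gcongr ‖s - 1‖ * ?_
    refine this.trans ?_
    have : u - N ≤ 1 := by linarith [hu.2]
    exact mul_le_of_le_one_right (by positivity) this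

lemma gz_diff (n : ℕ) : Differentiable ℂ (gz n) := by
  intro s
  have h1 : ((n + 1 : ℝ) : ℂ) ≠ 0 := by norm_cast
  have h2 : ((n + 2 : ℝ) : ℂ) ≠ 0 := by norm_cast
  unfold gz
  refine ((DifferentiableAt.mul (by fun_prop) ?_).add ?_).sub ?_ <;>
    refine DifferentiableAt.const_cpow (by fun_prop) (Or.inl ?_) <;> assumption

lemma summ_aux (a : ℝ) (ha : 0 < a) : Summable (fun n : ℕ => ((n : ℝ) + 1) ^ (-a - 1)) := by
  have := (Real.summable_nat_rpow (p := -a - 1)).2 (by linarith)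
  have := (summable_nat_add_iff 1).2 this
  simpa using this

lemma gz_tsum (s : ℂ) (hs : 1 < s.re) : 1 + ∑' n, gz n s = riemannZeta₁ s := by
  have hs1 : s ≠ 1 := by rintro rfl; simp at hs
  have hsum : Summable (fun n => gz n s) := by
    refine Summable.of_norm_bounded ((summ_aux s.re (by linarith)).mul_left (‖s - 1‖ * ‖s‖)) ?_
    intro n; exact gz_bound n s (by linarith)
  have t1 := hsum.tendsto_sum_tsum_nat
  have hz : HasSum (fun n : ℕ => ((n + 1 : ℝ) : ℂ) ^ (-s)) (riemannZeta s) := by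
    rw [zeta_eq_tsum_one_div_nat_add_one_cpow hs]
    have h0 := (Complex.summable_one_div_nat_cpow (p := s)).2 hs
    have h0 := (summable_nat_add_iff 1).2 h0
    have h1 : (fun n : ℕ => ((n + 1 : ℝ) : ℂ) ^ (-s)) = fun n : ℕ => 1 / ((n : ℂ) + 1) ^ s := by
      ext n; rw [Complex.cpow_neg]; push_cast; simp
    rw [h1]
    refine Summable.hasSum ?_
    simpa using h0
  have t2 : Filter.Tendsto (fun N : ℕ => ∑ n ∈ Finset.range N, gz n s) Filter.atTop
      (nhds ((s - 1) * riemannZeta s + (0 - 1))) := by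
    have e : ∀ N : ℕ, ∑ n ∈ Finset.range N, gz n s =
      (s - 1) * ∑ n ∈ Finset.range N, ((n + 1 : ℝ) : ℂ) ^ (-s) + (((N + 1 : ℝ) : ℂ) ^ (1 - s) - 1) := by
      intro N
      induction N with
      | zero => simp
      | succ k ih =>
        rw [Finset.sum_range_succ, ih, Finset.sum_range_succ, gz]
        have : ((k + 1 : ℕ) : ℝ) + 1 = k + 2 := by push_cast; ring
        rw [this]; ring
    simp_rw [e]
    refine (hz.tendsto_sum_nat.const_mul _).add (Filter.Tendsto.sub_const ?_ _)
    rw [tendsto_zero_iff_norm_tendsto_zero]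
    have e2 : ∀ N : ℕ, ‖((N + 1 : ℝ) : ℂ) ^ (1 - s)‖ = (N + 1 : ℝ) ^ (-(s.re - 1)) := by
      intro N
      rw [Complex.norm_cpow_eq_rpow_re_of_pos (by positivity)]
      simp
    simp_rw [e2]
    exact (tendsto_rpow_neg_atTop (by linarith)).comp
      (Filter.tendsto_atTop_add_const_right _ _ tendsto_natCast_atTop_atTop)
  rw [tendsto_nhds_unique t1 t2]
  have h3 := riemannZeta_eq_inv_sub_mul hs1
  have : s - 1 ≠ 0 := sub_ne_zero.2 hs1
  rw [h3]; field_simp; ring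

lemma gz_tsum' (s : ℂ) (hs : 1 / 4 < s.re) : 1 + ∑' n, gz n s = riemannZeta₁ s := by
  set B : ℝ := ‖s‖ + 3 with hB
  set U : Set ℂ := {z : ℂ | 1 / 4 < z.re} ∩ Metric.ball 0 B with hU
  have hUo : IsOpen U := (isOpen_lt continuous_const Complex.continuous_re).inter Metric.isOpen_ball
  have hUc : IsPreconnected U :=
    ((convex_halfSpace_re_gt _).inter (convex_ball _ _)).isPreconnected
  have hd : DifferentiableOn ℂ (fun s => ∑' n, gz n s) U := by
    refine Complex.differentiableOn_tsum_of_summable_norm (u := fun n : ℕ => (B + 1) * B * ((n : ℝ) + 1) ^ (-(1/4 : ℝ) - 1))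
      ((summ_aux (1/4) (by norm_num)).mul_left _) (fun i => (gz_diff i).differentiableOn) hUo ?_
    intro n w hw
    have hw1 : 1 / 4 < w.re := hw.1
    have hw2 : ‖w‖ < B := by simpa using hw.2
    refine (gz_bound n w (by linarith)).trans ?_
    have : ‖w - 1‖ ≤ B + 1 := (norm_sub_le _ _).trans (by simp; linarith)
    gcongr
    · linarith
  have hd2 : DifferentiableOn ℂ (fun s => 1 + ∑' n, gz n s) U := by
    exact (differentiableOn_const _).add hd
  have h2U : (2 : ℂ) ∈ U := by
    refine ⟨by simp; norm_num, ?_⟩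
    simp [hB]; linarith [norm_nonneg s]
  have hev : (fun s => 1 + ∑' n, gz n s) =ᶠ[nhds 2] riemannZeta₁ := by
    have : {z : ℂ | 1 < z.re} ∈ nhds (2 : ℂ) :=
      (isOpen_lt continuous_const Complex.continuous_re).mem_nhds (by simp)
    filter_upwards [this] with z hz using gz_tsum z hz
  have := (hd2.analyticOnNhd hUo).eqOn_of_preconnected_of_eventuallyEq
    (differentiable_riemannZeta₁.differentiableOn.analyticOnNhd hUo) hUc h2U hev
  exact this (show s ∈ U from ⟨hs, by simp [hB]⟩)

lemma zeta1_growth : ∃ K : ℝ, 1 ≤ K ∧ ∀ s : ℂ, 1 / 2 < s.re → ‖riemannZeta₁ s‖ ≤ K * (1 + ‖s‖) ^ 2 := by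
  set S := ∑' n : ℕ, ((n : ℝ) + 1) ^ (-(1/2 : ℝ) - 1) with hS
  have hS0 : 0 ≤ S := tsum_nonneg fun n => by positivity
  refine ⟨1 + S, by linarith, ?_⟩
  intro s hs
  rw [← gz_tsum' s (by linarith)]
  have h1 : ‖∑' n, gz n s‖ ≤ ∑' n : ℕ, ‖s - 1‖ * ‖s‖ * ((n : ℝ) + 1) ^ (-(1/2 : ℝ) - 1) := by
    refine tsum_of_norm_bounded ((summ_aux (1/2) (by norm_num)).mul_left _).hasSum ?_
    intro n
    refine (gz_bound n s (by linarith)).trans ?_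
    gcongr
    · linarith [(n.cast_nonneg : (0 : ℝ) ≤ n)]
  rw [tsum_mul_left] at h1
  have h2 : ‖s - 1‖ ≤ ‖s‖ + 1 := (norm_sub_le _ _).trans (by simp)
  have h3 : ‖s - 1‖ * ‖s‖ ≤ (1 + ‖s‖) ^ 2 := by nlinarith [norm_nonneg s]
  calc ‖1 + ∑' n, gz n s‖ ≤ 1 + ‖s - 1‖ * ‖s‖ * S := (norm_add_le _ _).trans (by rw [norm_one]; exact add_le_add_right h1 1)
    _ ≤ 1 + (1 + ‖s‖) ^ 2 * S := by gcongr
    _ ≤ _ := by nlinarith [norm_nonneg s]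

lemma zeta_two_lower (t : ℝ) : 1 / 4 ≤ ‖riemannZeta (2 + t * Complex.I)‖ := by
  set s : ℂ := 2 + t * Complex.I with hs
  have hre : s.re = 2 := by simp [hs]
  have h1 : 1 < s.re := by rw [hre]; norm_num
  rw [zeta_eq_tsum_one_div_nat_add_one_cpow h1]
  have h0 := (Complex.summable_one_div_nat_cpow (p := s)).2 h1
  have h0 := (summable_nat_add_iff 1).2 h0
  have h0' : Summable (fun n : ℕ => 1 / ((n : ℂ) + 1) ^ s) := by simpa using h0
  rw [h0'.tsum_eq_zero_add]
  have hz2 := hasSum_zeta_two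
  have hz3 := (hasSum_nat_add_iff' 2).2 hz2
  have hb : ‖∑' b : ℕ, 1 / (((b + 1 : ℕ) : ℂ) + 1) ^ s‖ ≤ Real.pi ^ 2 / 6 - ∑ i ∈ Finset.range 2, 1 / (i : ℝ) ^ 2 := by
    refine tsum_of_norm_bounded hz3 ?_
    intro n
    have e : (((n + 1 : ℕ) : ℂ) + 1) = (((n : ℝ) + 2 : ℝ) : ℂ) := by push_cast; ring
    rw [e, norm_div, Complex.norm_cpow_eq_rpow_re_of_pos (by positivity), hre]
    simp
  simp [Finset.sum_range_succ] at hb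
  have hpi : Real.pi ^ 2 / 6 < 7 / 4 := by
    have := Real.pi_lt_d2
    have := Real.pi_pos
    nlinarith
  have h4 := norm_sub_le_norm_add (1 / (((0 : ℕ) : ℂ) + 1) ^ s) (∑' b : ℕ, 1 / (((b + 1 : ℕ) : ℂ) + 1) ^ s)
  have h5 : ‖(1 / (((0 : ℕ) : ℂ) + 1) ^ s)‖ = 1 := by simp
  rw [h5] at h4
  refine le_trans ?_ h4
  have h6 : ‖∑' b : ℕ, 1 / (((b + 1 : ℕ) : ℂ) + 1) ^ s‖ ≤ Real.pi ^ 2 / 6 - 1 := by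
    simpa using hb
  linarith

lemma zeta1_ne_zero (hRH : RiemannHypothesis) (s : ℂ) (hs : 1 / 2 < s.re) : riemannZeta₁ s ≠ 0 := by
  by_cases h1 : s = 1
  · subst h1; simp
  intro h
  have h2 := riemannZeta_eq_inv_sub_mul h1
  rw [h, mul_zero] at h2
  have := hRH s h2 ?_ h1
  · linarith
  · rintro ⟨n, hn⟩
    have : s.re = -2 * (n + 1) := by rw [hn]; simp
    have h3 : (0 : ℝ) ≤ n := n.cast_nonneg
    linarith

lemma logderiv_bound (hRH : RiemannHypothesis) : ∃ K : ℝ, 0 < K ∧ ∀ s : ℂ, 11 / 20 ≤ s.re → s.re ≤ 2 →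
    ‖deriv riemannZeta₁ s / riemannZeta₁ s‖ ≤ K * (1 + |s.im|) ^ (1 / 20 : ℝ) := by
  obtain ⟨K, hK1, hK⟩ := zeta1_growth
  refine ⟨7500 * ((100 * K) ^ (1 / 40 : ℝ) / (1 / 40)), by positivity, ?_⟩
  intro s hs1 hs2
  set t := s.im with ht
  set s0 : ℂ := 2 + t * Complex.I with hs0
  set G := riemannZeta₁ with hG
  have hGd : Differentiable ℂ G := differentiable_riemannZeta₁
  set B := Metric.ball s0 (149 / 100) with hB
  have hBre : ∀ z ∈ B, 1 / 2 < z.re := by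
    intro z hz
    have h1 : ‖z - s0‖ < 149 / 100 := by simpa [hB, dist_eq_norm] using hz
    have h2 := (Complex.abs_re_le_norm (z - s0)).trans_lt h1
    have h3 : (z - s0).re = z.re - 2 := by simp [hs0]
    rw [h3] at h2
    linarith [(abs_lt.1 h2).1]
  have hdd : DifferentiableOn ℂ (fun z => deriv G z / G z) B := by
    refine DifferentiableOn.div ?_ hGd.differentiableOn (fun z hz => zeta1_ne_zero hRH z (hBre z hz))
    exact (hGd.contDiff (n := 2)).differentiable_deriv_two.differentiableOn
  obtain ⟨L, hL0, hL⟩ := hdd.isExactOn_ball.with_val_at s0 0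
  have hs0B : s0 ∈ B := by simp [hB]
  have hconst : ∀ z ∈ B, G z * Complex.exp (-L z) = G s0 := by
    have hd : ∀ z ∈ B, HasDerivAt (fun z => G z * Complex.exp (-L z)) 0 z := by
      intro z hz
      have h1 := (hGd z).hasDerivAt.mul ((hL z hz).neg.cexp)
      refine h1.congr_deriv ?_
      have := zeta1_ne_zero hRH z (hBre z hz)
      rw [← hG] at this
      field_simp
      simp
    intro z hz
    have := IsOpen.is_const_of_deriv_eq_zero (s := B) Metric.isOpen_ball (convex_ball _ _).isPreconnected
      (fun z hz => (hd z hz).differentiableAt.differentiableWithinAt) (fun z hz => (hd z hz).deriv) hz hs0B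
    simpa [hL0] using this
  have hGs0 : 1 / 4 ≤ ‖G s0‖ := by
    have hne : s0 ≠ 1 := by
      intro h
      have := congrArg Complex.re h
      simp [hs0] at this
    have h1 := riemannZeta_eq_inv_sub_mul hne
    have h2 : G s0 = (s0 - 1) * riemannZeta s0 := by
      rw [h1, hG]; field_simp [sub_ne_zero.2 hne]
    have h3 : 1 ≤ ‖s0 - 1‖ := by
      have := (le_abs_self _).trans (Complex.abs_re_le_norm (s0 - 1))
      have e : (s0 - 1).re = 1 := by simp [hs0]; norm_num
      linarith
    rw [h2, norm_mul]
    nlinarith [zeta_two_lower t]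
  set M := Real.log (100 * K * (1 + |t|) ^ 2) with hM
  have ht0 := abs_nonneg t
  have hy : 100 ≤ 100 * K * (1 + |t|) ^ 2 := by
    have : 1 ≤ (1 + |t|) ^ 2 := by nlinarith
    nlinarith
  have hMpos : 0 < M := Real.log_pos (by linarith)
  have hmaps : ∀ z ∈ B, (L z).re ≤ M := by
    intro z hz
    have h1 : ‖z - s0‖ < 149 / 100 := by simpa [hB, dist_eq_norm] using hz
    have hzn : ‖z‖ ≤ 4 + |t| := by
      have : ‖s0‖ ≤ 2 + |t| := by
        refine (norm_add_le _ _).trans ?_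
        simp
      have h2 : ‖z‖ ≤ ‖z - s0‖ + ‖s0‖ := by simpa using norm_add_le (z - s0) s0
      linarith
    have h3 := hK z (hBre z hz)
    have h4 : ‖G z‖ ≤ 25 * K * (1 + |t|) ^ 2 := by
      refine h3.trans ?_
      have : (1 + ‖z‖) ^ 2 ≤ (5 * (1 + |t|)) ^ 2 := by
        gcongr; linarith
      nlinarith
    have h5 := congrArg norm (hconst z hz)
    rw [norm_mul, Complex.norm_exp] at h5
    have h6 : Real.exp (L z).re * Real.exp (-L z).re = 1 := by
      rw [← Real.exp_add]; simp
    have h7 : Real.exp (L z).re ≤ 100 * K * (1 + |t|) ^ 2 := by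
      have e : ‖G z‖ = ‖G s0‖ * Real.exp (L z).re := by
        rw [← h5]; linear_combination (-‖G z‖) * h6
      have := Real.exp_pos (L z).re
      nlinarith
    rw [hM]
    exact (Real.le_log_iff_exp_le (by linarith)).2 h7
  have hLB : ∀ z, ‖z - s0‖ ≤ 147 / 100 → ‖L z‖ ≤ 150 * M := by
    intro z hz
    have h1 := Complex.borelCaratheodory_zero (f := fun w => L (s0 + w)) (R := 149 / 100) (z := z - s0) (M := M) hMpos
      ?_ ?_ (by norm_num) ?_ (by simpa using hL0)
    · have h2 : ‖L z‖ ≤ 2 * M * ‖z - s0‖ / (149 / 100 - ‖z - s0‖) := by simpa using h1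
      refine h2.trans ?_
      rw [div_le_iff₀ (by linarith)]
      nlinarith
    · intro w hw
      have : s0 + w ∈ B := by simpa [hB] using hw
      have h3 := (hL _ this).comp_const_add s0 w
      exact h3.differentiableAt.differentiableWithinAt
    · intro w hw
      exact hmaps _ (by simpa [hB] using hw)
    · simp; linarith
  have hss0 : ‖s - s0‖ ≤ 145 / 100 := by
    have e : s - s0 = ((s.re - 2 : ℝ) : ℂ) := by
      apply Complex.ext <;> simp [hs0, ht]
    rw [e, Complex.norm_real, Real.norm_eq_abs, abs_le]
    constructor <;> linarith
  have hsB : s ∈ B := by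
    rw [hB, Metric.mem_ball, dist_eq_norm]; linarith
  have hder := Complex.norm_deriv_le_of_forall_mem_sphere_norm_le (f := L) (c := s) (R := 2 / 100) (C := 150 * M)
    (by norm_num) ?_ ?_
  · rw [(hL s hsB).deriv] at hder
    refine hder.trans ?_
    have h1 := Real.log_le_rpow_div (x := 100 * K * (1 + |t|) ^ 2) (ε := 1 / 40) (by positivity) (by norm_num)
    rw [Real.mul_rpow (by positivity) (by positivity), ← Real.rpow_natCast, ← Real.rpow_mul (by positivity)] at h1
    norm_num at h1 ⊢
    rw [← hM] at h1
    linarith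
  · refine DifferentiableOn.diffContOnCl ?_
    intro z hz
    have hz' : ‖z - s‖ ≤ 2 / 100 := by
      rw [closure_ball _ (by norm_num)] at hz
      simpa [dist_eq_norm] using hz
    have : z ∈ B := by
      rw [hB, Metric.mem_ball, dist_eq_norm]
      have : ‖z - s0‖ ≤ ‖z - s‖ + ‖s - s0‖ := by simpa using norm_add_le (z - s) (s - s0)
      linarith
    exact (hL z this).differentiableAt.differentiableWithinAt
  · intro z hz
    have hz' : ‖z - s‖ = 2 / 100 := by simpa [dist_eq_norm] using hz
    refine hLB z ?_
    have : ‖z - s0‖ ≤ ‖z - s‖ + ‖s - s0‖ := by simpa using norm_add_le (z - s) (s - s0)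
    linarith

noncomputable def psi1 (x : ℝ) : ℝ := ∑ n ∈ Finset.Icc 1 ⌊x⌋₊, ArithmeticFunction.vonMangoldt n * (x - n)
noncomputable def phi1 (x : ℝ) : ℝ := ∑ n ∈ Finset.Icc 1 ⌊x⌋₊, ArithmeticFunction.vonMangoldt n * n
noncomputable def Dfun (x : ℝ) : ℝ := if 1 < x then psi1 x - (x - 1) ^ 2 / 2 else 0

lemma psi_Icc (x : ℝ) : Chebyshev.psi x = ∑ n ∈ Finset.Icc 1 ⌊x⌋₊, ArithmeticFunction.vonMangoldt n := by
  rw [Chebyshev.psi]; rfl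

lemma psi1_eq (x : ℝ) : psi1 x = x * Chebyshev.psi x - phi1 x := by
  rw [psi_Icc, psi1, phi1, Finset.mul_sum, ← Finset.sum_sub_distrib]
  exact Finset.sum_congr rfl fun n _ => by ring

lemma psi_meas : Measurable Chebyshev.psi := Chebyshev.psi_mono.measurable

lemma phi1_mono : Monotone phi1 := by
  intro x y h
  unfold phi1
  refine Finset.sum_le_sum_of_subset_of_nonneg (Finset.Icc_subset_Icc_right (Nat.floor_mono h)) ?_
  intro i _ _
  exact mul_nonneg ArithmeticFunction.vonMangoldt_nonneg i.cast_nonneg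

lemma phi1_nonneg (x : ℝ) : 0 ≤ phi1 x :=
  Finset.sum_nonneg fun i _ => mul_nonneg ArithmeticFunction.vonMangoldt_nonneg i.cast_nonneg

lemma psi_O (x : ℝ) (hx : 0 ≤ x) : Chebyshev.psi x ≤ 10 * x := by
  refine (Chebyshev.psi_le_const_mul_self hx).trans ?_
  gcongr
  have : Real.log 4 = 2 * Real.log 2 := by
    rw [show (4 : ℝ) = 2 ^ 2 by norm_num, Real.log_pow]; norm_num
  linarith [Real.log_two_lt_d9]

lemma phi1_O (x : ℝ) (hx : 0 ≤ x) : phi1 x ≤ 10 * x ^ 2 := by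
  have : phi1 x ≤ x * Chebyshev.psi x := by
    rw [psi_Icc, phi1, Finset.mul_sum]
    refine Finset.sum_le_sum fun n hn => ?_
    have h1 : (n : ℝ) ≤ x := (Nat.le_floor_iff hx).1 (Finset.mem_Icc.1 hn).2
    have := ArithmeticFunction.vonMangoldt_nonneg (n := n)
    nlinarith
  have := psi_O x hx
  nlinarith

lemma int_aux (f : ℝ → ℝ) (hf : Measurable f) (C a : ℝ) (hb : ∀ t, 1 < t → |f t| ≤ C * t ^ a) (z : ℂ)
    (hz : a + z.re < -1) : MeasureTheory.IntegrableOn (fun t : ℝ => (f t : ℂ) * (t : ℂ) ^ z) (Set.Ioi 1) := by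
  have hi : MeasureTheory.IntegrableOn (fun t : ℝ => C * t ^ (a + z.re)) (Set.Ioi 1) :=
    (integrableOn_Ioi_rpow_of_lt hz one_pos).const_mul C
  refine MeasureTheory.Integrable.mono' hi ?_ ?_
  · refine MeasureTheory.AEStronglyMeasurable.mul (Complex.measurable_ofReal.comp hf).aestronglyMeasurable ?_
    refine ContinuousOn.aestronglyMeasurable ?_ measurableSet_Ioi
    intro t ht
    have ht : (0 : ℝ) < t := lt_trans one_pos ht
    exact (Complex.continuousAt_ofReal_cpow_const t z (Or.inr ht.ne')).continuousWithinAt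
  · refine (MeasureTheory.ae_restrict_iff' measurableSet_Ioi).2 (Filter.Eventually.of_forall ?_)
    intro t ht
    have ht0 : (0 : ℝ) < t := lt_trans one_pos ht
    rw [norm_mul, Complex.norm_real, Complex.norm_cpow_eq_rpow_re_of_pos ht0, Real.rpow_add ht0, ← mul_assoc]
    gcongr
    exact hb t ht

lemma L_eq (s : ℂ) (hs : 1 < s.re) : LSeries (fun n => (ArithmeticFunction.vonMangoldt n : ℂ)) s
    = 1 / (s - 1) - deriv riemannZeta₁ s / riemannZeta₁ s := by
  have hs1 : s ≠ 1 := by rintro rfl; simp at hs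
  have h := ArithmeticFunction.LSeries_vonMangoldt_eq_deriv_riemannZeta_div hs
  rw [h, deriv_riemannZeta_eq_neg_inv_sub_sq_mul_add hs1, riemannZeta_eq_inv_sub_mul hs1]
  have h2 := riemannZeta_ne_zero_of_one_lt_re hs
  rw [riemannZeta_eq_inv_sub_mul hs1] at h2
  have h3 : riemannZeta₁ s ≠ 0 := right_ne_zero_of_mul h2
  have h4 := sub_ne_zero.2 hs1
  field_simp
  ring

lemma int_psi (s : ℂ) (hs : s.re = 2) : ∫ t in Set.Ioi (1 : ℝ), (Chebyshev.psi t : ℂ) * (t : ℂ) ^ (-(s + 1))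
    = (1 / (s - 1) - deriv riemannZeta₁ s / riemannZeta₁ s) / s := by
  have hs0 : s ≠ 0 := by rintro rfl; simp at hs
  rw [← L_eq s (by rw [hs]; norm_num)]
  rw [LSeries_eq_mul_integral_of_nonneg (fun n => ArithmeticFunction.vonMangoldt n) (r := 1) (by norm_num)
    (by rw [hs]; norm_num) ?_ (fun n => ArithmeticFunction.vonMangoldt_nonneg)]
  · rw [mul_div_cancel_left₀ _ hs0]
    refine MeasureTheory.integral_congr_ae (Filter.Eventually.of_forall fun t => ?_)
    simp only [psi_Icc]; push_cast; rfl
  · refine Asymptotics.IsBigO.of_bound 10 (Filter.Eventually.of_forall fun n => ?_)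
    have := psi_O n n.cast_nonneg
    rw [psi_Icc, Nat.floor_natCast] at this
    rw [Real.norm_of_nonneg (Finset.sum_nonneg fun i _ => ArithmeticFunction.vonMangoldt_nonneg)]
    simpa using this

lemma int_phi (s : ℂ) (hs : s.re = 2) : ∫ t in Set.Ioi (1 : ℝ), (phi1 t : ℂ) * (t : ℂ) ^ (-(s + 1 + 1))
    = (1 / (s - 1) - deriv riemannZeta₁ s / riemannZeta₁ s) / (s + 1) := by
  have hs0 : s + 1 ≠ 0 := by intro h; have := congrArg Complex.re h; simp [hs] at this; norm_num at this
  rw [← L_eq s (by rw [hs]; norm_num)]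
  have e : LSeries (fun n => (ArithmeticFunction.vonMangoldt n : ℂ)) s =
      LSeries (fun n => ((ArithmeticFunction.vonMangoldt n * n : ℝ) : ℂ)) (s + 1) := by
    unfold LSeries
    refine tsum_congr fun n => ?_
    rcases Nat.eq_zero_or_pos n with rfl | hn
    · simp
    · have hn' : (n : ℂ) ≠ 0 := by exact_mod_cast hn.ne'
      rw [LSeries.term_of_ne_zero hn.ne', LSeries.term_of_ne_zero hn.ne', Complex.cpow_add _ _ hn', Complex.cpow_one]
      push_cast
      field_simp
  rw [e, LSeries_eq_mul_integral_of_nonneg (fun n => ArithmeticFunction.vonMangoldt n * n) (r := 2) (by norm_num)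
    (by simp [hs]) ?_ (fun n => mul_nonneg ArithmeticFunction.vonMangoldt_nonneg n.cast_nonneg)]
  · rw [mul_div_cancel_left₀ _ hs0]
    refine MeasureTheory.integral_congr_ae (Filter.Eventually.of_forall fun t => ?_)
    simp only [phi1]; push_cast; rfl
  · refine Asymptotics.IsBigO.of_bound 10 (Filter.Eventually.of_forall fun n => ?_)
    have := phi1_O n n.cast_nonneg
    rw [phi1, Nat.floor_natCast] at this
    rw [Real.norm_of_nonneg (Finset.sum_nonneg fun i _ => mul_nonneg ArithmeticFunction.vonMangoldt_nonneg i.cast_nonneg)]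
    simpa using this

lemma cpow_succ_aux (t z : ℂ) (ht : t ≠ 0) : t ^ (z + 1) = t ^ z * t := by
  rw [Complex.cpow_add _ _ ht, Complex.cpow_one]

lemma int_pol (s : ℂ) (hs : s.re = 2) : MeasureTheory.IntegrableOn (fun t : ℝ => (((t - 1) ^ 2 / 2 : ℝ) : ℂ) * (t : ℂ) ^ (-(s + 1 + 1))) (Set.Ioi 1) ∧
    ∫ t in Set.Ioi (1 : ℝ), (((t - 1) ^ 2 / 2 : ℝ) : ℂ) * (t : ℂ) ^ (-(s + 1 + 1))
    = 1 / ((s - 1) * s * (s + 1)) := by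
  have i0 := integrableOn_Ioi_cpow_of_lt (a := -s) (by simp [hs]) one_pos
  have i1 := integrableOn_Ioi_cpow_of_lt (a := -s - 1) (by simp [hs]; norm_num) one_pos
  have i2 := integrableOn_Ioi_cpow_of_lt (a := -s - 2) (by simp [hs]; norm_num) one_pos
  have e : Set.EqOn (fun t : ℝ => (((t - 1) ^ 2 / 2 : ℝ) : ℂ) * (t : ℂ) ^ (-(s + 1 + 1)))
      (fun t : ℝ => (1/2 : ℂ) * (t : ℂ) ^ (-s) - (t : ℂ) ^ (-s - 1) + (1/2 : ℂ) * (t : ℂ) ^ (-s - 2)) (Set.Ioi 1) := by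
    intro t ht
    have ht0 : (t : ℂ) ≠ 0 := by
      have : (0 : ℝ) < t := lt_trans one_pos ht
      exact_mod_cast this.ne'
    have a1 : (t : ℂ) ^ (-s) = (t : ℂ) ^ (-s - 2) * t ^ 2 := by
      rw [← Complex.cpow_natCast, ← Complex.cpow_add _ _ ht0]; congr 1; push_cast; ring
    have a2 : (t : ℂ) ^ (-s - 1) = (t : ℂ) ^ (-s - 2) * t := by
      rw [← cpow_succ_aux _ _ ht0]; congr 1; ring
    simp only
    rw [show -(s + 1 + 1) = -s - 2 by ring, a1, a2]
    push_cast; ring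
  have I : MeasureTheory.IntegrableOn (fun t : ℝ => (1/2 : ℂ) * (t : ℂ) ^ (-s) - (t : ℂ) ^ (-s - 1) + (1/2 : ℂ) * (t : ℂ) ^ (-s - 2)) (Set.Ioi 1) :=
    ((i0.const_mul _).sub i1).add (i2.const_mul _)
  refine ⟨I.congr_fun e.symm measurableSet_Ioi, ?_⟩
  rw [MeasureTheory.setIntegral_congr_fun measurableSet_Ioi e]
  have i01 : MeasureTheory.IntegrableOn (fun t : ℝ => (1/2 : ℂ) * (t : ℂ) ^ (-s) - (t : ℂ) ^ (-s - 1)) (Set.Ioi 1) :=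
    (i0.const_mul _).sub i1
  rw [MeasureTheory.integral_add i01 (i2.const_mul _), MeasureTheory.integral_sub (i0.const_mul _) i1,
    MeasureTheory.integral_const_mul, MeasureTheory.integral_const_mul,
    integral_Ioi_cpow_of_lt (by simp [hs]) one_pos, integral_Ioi_cpow_of_lt (by simp [hs]; norm_num) one_pos,
    integral_Ioi_cpow_of_lt (by simp [hs]; norm_num) one_pos]
  simp only [Complex.ofReal_one, Complex.one_cpow]
  have h0 : s ≠ 0 := by rintro rfl; simp at hs
  have h1 : s - 1 ≠ 0 := by intro h; have := congrArg Complex.re h; simp [hs] at this; norm_num at this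
  have h2 : s + 1 ≠ 0 := by intro h; have := congrArg Complex.re h; simp [hs] at this; norm_num at this
  have e1 : -s + 1 = -(s - 1) := by ring
  have e2 : -s - 1 + 1 = -s := by ring
  have e3 : -s - 2 + 1 = -(s + 1) := by ring
  rw [e1, e2, e3]
  field_simp
  ring

lemma mellin_D (s : ℂ) (hs : s.re = 2) :
    MellinConvergent (fun t => (Dfun t : ℂ)) (-s - 1) ∧
    mellin (fun t => (Dfun t : ℂ)) (-s - 1) = -(deriv riemannZeta₁ s / riemannZeta₁ s) / (s * (s + 1)) := by
  have ia : MeasureTheory.IntegrableOn (fun t : ℝ => (Chebyshev.psi t : ℂ) * (t : ℂ) ^ (-(s + 1))) (Set.Ioi 1) := by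
    refine int_aux _ psi_meas 10 1 ?_ _ (by simp [hs])
    intro t ht
    rw [abs_of_nonneg (Chebyshev.psi_nonneg t), Real.rpow_one]
    exact psi_O t (by linarith)
  have ib : MeasureTheory.IntegrableOn (fun t : ℝ => (phi1 t : ℂ) * (t : ℂ) ^ (-(s + 1 + 1))) (Set.Ioi 1) := by
    refine int_aux _ phi1_mono.measurable 10 2 ?_ _ (by simp [hs]; norm_num)
    intro t ht
    rw [abs_of_nonneg (phi1_nonneg t)]
    have := phi1_O t (by linarith)
    exact_mod_cast this
  obtain ⟨ic, hc⟩ := int_pol s hs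
  have iab : MeasureTheory.IntegrableOn (fun t : ℝ => (Chebyshev.psi t : ℂ) * (t : ℂ) ^ (-(s + 1)) - (phi1 t : ℂ) * (t : ℂ) ^ (-(s + 1 + 1))) (Set.Ioi 1) := ia.sub ib
  have I := iab.sub ic
  have e : (fun t : ℝ => (t : ℂ) ^ (-s - 1 - 1) • (Dfun t : ℂ)) = (Set.Ioi (1 : ℝ)).indicator
      (fun t : ℝ => (Chebyshev.psi t : ℂ) * (t : ℂ) ^ (-(s + 1)) - (phi1 t : ℂ) * (t : ℂ) ^ (-(s + 1 + 1))
        - (((t - 1) ^ 2 / 2 : ℝ) : ℂ) * (t : ℂ) ^ (-(s + 1 + 1))) := by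
    ext t
    by_cases ht : 1 < t
    · rw [Set.indicator_of_mem (show t ∈ Set.Ioi (1 : ℝ) from ht)]
      have ht0 : (t : ℂ) ≠ 0 := by
        have : (0 : ℝ) < t := lt_trans one_pos ht
        exact_mod_cast this.ne'
      have a1 : (t : ℂ) ^ (-(s + 1)) = (t : ℂ) ^ (-s - 1 - 1) * t := by
        rw [← cpow_succ_aux _ _ ht0]; congr 1; ring
      rw [Dfun, if_pos ht, psi1_eq, a1, show -(s + 1 + 1) = -s - 1 - 1 by ring, smul_eq_mul]
      push_cast; ring
    · rw [Set.indicator_of_notMem (show t ∉ Set.Ioi (1 : ℝ) from ht)]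
      simp [Dfun, ht]
  have hsub : Set.Ioi (1 : ℝ) ∩ Set.Ioi 0 = Set.Ioi 1 := by
    apply Set.inter_eq_left.2; intro t ht; exact lt_trans one_pos (Set.mem_Ioi.1 ht)
  constructor
  · unfold MellinConvergent
    rw [e, MeasureTheory.IntegrableOn, MeasureTheory.integrable_indicator_iff measurableSet_Ioi, MeasureTheory.IntegrableOn,
      MeasureTheory.Measure.restrict_restrict measurableSet_Ioi, hsub]
    exact I
  · unfold mellin
    rw [e, MeasureTheory.integral_indicator measurableSet_Ioi, MeasureTheory.Measure.restrict_restrict measurableSet_Ioi, hsub]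
    rw [MeasureTheory.integral_sub iab ic, MeasureTheory.integral_sub ia ib, int_psi s hs, int_phi s hs, hc]
    have h0 : s ≠ 0 := by rintro rfl; simp at hs
    have h1 : s - 1 ≠ 0 := by intro h; have := congrArg Complex.re h; simp [hs] at this; norm_num at this
    have h2 : s + 1 ≠ 0 := by intro h; have := congrArg Complex.re h; simp [hs] at this; norm_num at this
    generalize deriv riemannZeta₁ s / riemannZeta₁ s = F
    field_simp
    ring

noncomputable def PhiZ (s : ℂ) : ℂ := -(deriv riemannZeta₁ s / riemannZeta₁ s) / (s * (s + 1))

lemma PhiZ_bound (hRH : RiemannHypothesis) : ∃ K : ℝ, 0 < K ∧ ∀ s : ℂ, 11 / 20 ≤ s.re → s.re ≤ 2 →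
    ‖PhiZ s‖ ≤ K * (1 + |s.im|) ^ (-(39 / 20) : ℝ) := by
  obtain ⟨K, hK0, hK⟩ := logderiv_bound hRH
  refine ⟨16 * K, by positivity, ?_⟩
  intro s h1 h2
  have hp : 0 < 1 + |s.im| := by positivity
  have e : (1 + |s.im|) ^ (-(39 / 20) : ℝ) = (1 + |s.im|) ^ (1 / 20 : ℝ) / ((1 + |s.im|) * (1 + |s.im|)) := by
    rw [eq_div_iff (by positivity)]
    rw [show (1 + |s.im|) * (1 + |s.im|) = (1 + |s.im|) ^ (2 : ℝ) by rw [Real.rpow_two]; ring, ← Real.rpow_add hp]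
    norm_num
  have a1 : (1 + |s.im|) / 4 ≤ ‖s‖ := by
    have := (le_abs_self _).trans (Complex.abs_re_le_norm s)
    have := Complex.abs_im_le_norm s
    linarith
  have a2 : (1 + |s.im|) / 4 ≤ ‖s + 1‖ := by
    have := (le_abs_self _).trans (Complex.abs_re_le_norm (s + 1))
    have h3 := Complex.abs_im_le_norm (s + 1)
    simp at this h3
    linarith
  rw [PhiZ, norm_div, norm_neg, norm_mul, e, div_le_iff₀ (by nlinarith)]
  refine (hK s h1 h2).trans ?_
  have h5 : (1 + |s.im|) / 4 * ((1 + |s.im|) / 4) ≤ ‖s‖ * ‖s + 1‖ := by gcongr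
  set A := (1 + |s.im|) ^ (1 / 20 : ℝ) with hA
  have hA0 : 0 ≤ A := by positivity
  calc K * A = 16 * K * (A / ((1 + |s.im|) * (1 + |s.im|))) * ((1 + |s.im|) / 4 * ((1 + |s.im|) / 4)) := by
        field_simp; ring
    _ ≤ _ := by gcongr

lemma PhiZ_diff (hRH : RiemannHypothesis) (s : ℂ) (hs : 1 / 2 < s.re) : DifferentiableAt ℂ PhiZ s := by
  unfold PhiZ
  have h0 : s ≠ 0 := by rintro rfl; simp at hs; linarith
  have h2 : s + 1 ≠ 0 := by intro h; have := congrArg Complex.re h; simp at this; linarith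
  refine DifferentiableAt.div (DifferentiableAt.neg (DifferentiableAt.div ?_ (differentiable_riemannZeta₁ s) (zeta1_ne_zero hRH s hs)))
    (by fun_prop) (mul_ne_zero h0 h2)
  exact (differentiable_riemannZeta₁.contDiff (n := 2)).differentiable_deriv_two s

lemma vert_integrable (H : ℂ → ℂ) (a C : ℝ) (hd : ∀ s : ℂ, s.re = a → ContinuousAt H s)
    (hb : ∀ s : ℂ, s.re = a → ‖H s‖ ≤ C * (1 + |s.im|) ^ (-(39 / 20) : ℝ)) :
    MeasureTheory.Integrable (fun y : ℝ => H (a + y * Complex.I)) := by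
  have hi : MeasureTheory.Integrable (fun y : ℝ => C * (1 + ‖y‖) ^ (-(39 / 20) : ℝ)) :=
    (integrable_one_add_norm (by simp; norm_num)).const_mul C
  refine hi.mono' ?_ (Filter.Eventually.of_forall fun y => ?_)
  · refine Continuous.aestronglyMeasurable ?_
    rw [continuous_iff_continuousAt]
    intro y
    refine ContinuousAt.comp (f := fun y : ℝ => (a + y * Complex.I : ℂ)) (hd _ (by simp)) (by fun_prop)
  · simpa using hb (a + y * Complex.I) (by simp)

lemma contour_shift (H : ℂ → ℂ) (a b C : ℝ) (hab : a ≤ b) 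
    (hd : ∀ s : ℂ, a ≤ s.re → s.re ≤ b → DifferentiableAt ℂ H s)
    (hb : ∀ s : ℂ, a ≤ s.re → s.re ≤ b → ‖H s‖ ≤ C * (1 + |s.im|) ^ (-(39 / 20) : ℝ)) :
    ∫ y : ℝ, H (a + y * Complex.I) = ∫ y : ℝ, H (b + y * Complex.I) := by
  have ia := vert_integrable H a C (fun s hs => (hd s hs.ge (hs.le.trans hab)).continuousAt)
    (fun s hs => hb s hs.ge (hs.le.trans hab))
  have ib := vert_integrable H b C (fun s hs => (hd s (hab.trans hs.ge) hs.le).continuousAt)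
    (fun s hs => hb s (hab.trans hs.ge) hs.le)
  have ta := MeasureTheory.intervalIntegral_tendsto_integral ia Filter.tendsto_neg_atTop_atBot Filter.tendsto_id
  have tb := MeasureTheory.intervalIntegral_tendsto_integral ib Filter.tendsto_neg_atTop_atBot Filter.tendsto_id
  have hrect : ∀ T : ℝ, (∫ x : ℝ in a..b, H (x + ((-T : ℝ) : ℂ) * Complex.I)) - (∫ x : ℝ in a..b, H (x + (T : ℂ) * Complex.I))
      + Complex.I * ((∫ y : ℝ in (-T)..T, H (b + y * Complex.I)) - ∫ y : ℝ in (-T)..T, H (a + y * Complex.I)) = 0 := by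
    intro T
    have := Complex.integral_boundary_rect_eq_zero_of_differentiableOn H (a + ((-T : ℝ) : ℂ) * Complex.I) (b + (T : ℂ) * Complex.I) ?_
    · simp at this ⊢
      linear_combination this
    · intro s hs
      rw [Complex.mem_reProdIm] at hs
      have h1 : s.re ∈ Set.uIcc a b := by simpa using hs.1
      rw [Set.uIcc_of_le hab] at h1
      exact (hd s h1.1 h1.2).differentiableWithinAt
  have tz : Filter.Tendsto (fun T : ℝ => C * (1 + T) ^ (-(39 / 20) : ℝ) * |b - a|) Filter.atTop (nhds 0) := by
    have h1 : Filter.Tendsto (fun T : ℝ => (1 + T) ^ (-(39 / 20) : ℝ)) Filter.atTop (nhds 0) :=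
      (tendsto_rpow_neg_atTop (by norm_num)).comp (Filter.tendsto_atTop_add_const_left _ _ Filter.tendsto_id)
    simpa using (h1.const_mul C).mul_const |b - a|
  have hor : ∀ T : ℝ, 0 ≤ |T| → ‖∫ x : ℝ in a..b, H (x + (T : ℂ) * Complex.I)‖ ≤ C * (1 + |T|) ^ (-(39 / 20) : ℝ) * |b - a| := by
    intro T _
    refine intervalIntegral.norm_integral_le_of_norm_le_const fun x hx => ?_
    rw [Set.uIoc_of_le hab] at hx
    simpa using hb (x + (T : ℂ) * Complex.I) (by simpa using hx.1.le) (by simpa using hx.2)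
  have t1 : Filter.Tendsto (fun T : ℝ => ∫ x : ℝ in a..b, H (x + (T : ℂ) * Complex.I)) Filter.atTop (nhds 0) := by
    refine squeeze_zero_norm' ?_ tz
    filter_upwards [Filter.eventually_ge_atTop 0] with T hT
    simpa [abs_of_nonneg hT] using hor T (abs_nonneg T)
  have t2 : Filter.Tendsto (fun T : ℝ => ∫ x : ℝ in a..b, H (x + ((-T : ℝ) : ℂ) * Complex.I)) Filter.atTop (nhds 0) := by
    refine squeeze_zero_norm' ?_ tz
    filter_upwards [Filter.eventually_ge_atTop 0] with T hT
    have := hor (-T) (abs_nonneg _)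
    rwa [abs_neg, abs_of_nonneg hT] at this
  have t3 := (t2.sub t1).add ((tb.sub ta).const_mul Complex.I)
  have t4 := t3.congr (fun T => hrect T)
  have := tendsto_nhds_unique t4 tendsto_const_nhds
  simp only [sub_zero, zero_add] at this
  have := (mul_eq_zero.1 this).resolve_left Complex.I_ne_zero
  exact (sub_eq_zero.1 this).symm

lemma psi1_cont (x : ℝ) (hx : 1 < x) : ContinuousAt psi1 x := by
  set N := ⌊x⌋₊ + 1 with hN
  have h1 : psi1 =ᶠ[nhds x] fun y => ∑ n ∈ Finset.Icc 1 N, ArithmeticFunction.vonMangoldt n * max (y - n) 0 := by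
    have hxN : x < N := by rw [hN]; push_cast; exact Nat.lt_floor_add_one x
    filter_upwards [Ioo_mem_nhds hx hxN] with y hy
    have hy0 : 0 ≤ y := by linarith [hy.1]
    have hyN : ⌊y⌋₊ ≤ N := ((Nat.floor_lt hy0).2 hy.2).le
    rw [psi1]
    rw [← Finset.sum_subset (Finset.Icc_subset_Icc_right hyN)]
    · refine Finset.sum_congr rfl fun n hn => ?_
      have := (Nat.le_floor_iff hy0).1 (Finset.mem_Icc.1 hn).2
      rw [max_eq_left (by linarith)]
    · intro n hn hn'
      have h3 : ¬ n ≤ ⌊y⌋₊ := fun h => hn' (Finset.mem_Icc.2 ⟨(Finset.mem_Icc.1 hn).1, h⟩)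
      have h4 : y < n := (Nat.floor_lt hy0).1 (not_le.1 h3)
      rw [max_eq_right (by linarith), mul_zero]
  rw [continuousAt_congr h1]
  fun_prop

lemma Dfun_cont (x : ℝ) (hx : 1 < x) : ContinuousAt (fun t => (Dfun t : ℂ)) x := by
  have h1 : (fun t => (Dfun t : ℂ)) =ᶠ[nhds x] fun y => ((psi1 y - (y - 1) ^ 2 / 2 : ℝ) : ℂ) := by
    filter_upwards [Ioi_mem_nhds hx] with y hy
    rw [Dfun, if_pos (Set.mem_Ioi.1 hy)]
  rw [continuousAt_congr h1]
  have := psi1_cont x hx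
  exact Complex.continuous_ofReal.continuousAt.comp (this.sub (by fun_prop))

lemma D_formula (hRH : RiemannHypothesis) (x : ℝ) (hx : 1 < x) :
    MeasureTheory.Integrable (fun y : ℝ => (x : ℂ) ^ (((11 / 20 : ℝ) : ℂ) + y * Complex.I + 1) * PhiZ (((11 / 20 : ℝ) : ℂ) + y * Complex.I)) ∧
    (Dfun x : ℂ) = (1 / (2 * Real.pi) : ℂ) * ∫ y : ℝ, (x : ℂ) ^ (((11 / 20 : ℝ) : ℂ) + y * Complex.I + 1) * PhiZ (((11 / 20 : ℝ) : ℂ) + y * Complex.I) := by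
  obtain ⟨K, hK0, hK⟩ := PhiZ_bound hRH
  have hx0 : 0 < x := by linarith
  have hxc : (x : ℂ) ≠ 0 := by exact_mod_cast hx0.ne'
  set H : ℂ → ℂ := fun s => (x : ℂ) ^ (s + 1) * PhiZ s with hH
  have hHd : ∀ s : ℂ, 11 / 20 ≤ s.re → s.re ≤ 2 → DifferentiableAt ℂ H s := by
    intro s h1 h2
    exact (DifferentiableAt.const_cpow (by fun_prop) (Or.inl hxc)).mul (PhiZ_diff hRH s (by linarith))
  have hHb : ∀ s : ℂ, 11 / 20 ≤ s.re → s.re ≤ 2 → ‖H s‖ ≤ x ^ (3 : ℝ) * K * (1 + |s.im|) ^ (-(39 / 20) : ℝ) := by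
    intro s h1 h2
    rw [hH]; simp only
    rw [norm_mul, Complex.norm_cpow_eq_rpow_re_of_pos hx0, mul_assoc]
    gcongr
    · exact hx.le
    · simp; linarith
    · exact hK s h1 h2
  have hcs := contour_shift H (11 / 20) 2 (x ^ (3 : ℝ) * K) (by norm_num) hHd hHb
  have hP2 : MeasureTheory.Integrable (fun y : ℝ => PhiZ (((2 : ℝ) : ℂ) + y * Complex.I)) :=
    vert_integrable PhiZ 2 K (fun s hs => (PhiZ_diff hRH s (by linarith)).continuousAt)
      (fun s hs => hK s (by linarith) hs.le)
  refine ⟨vert_integrable H (11 / 20) (x ^ (3 : ℝ) * K) (fun s hs => (hHd s hs.ge (by linarith)).continuousAt) (fun s hs => hHb s hs.ge (by linarith)), ?_⟩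
  have hmel : ∀ y : ℝ, mellin (fun t => (Dfun t : ℂ)) (((-3 : ℝ) : ℂ) + y * Complex.I) = PhiZ (((2 : ℝ) : ℂ) + ((-y : ℝ) : ℂ) * Complex.I) := by
    intro y
    rw [PhiZ, ← (mellin_D (((2 : ℝ) : ℂ) + ((-y : ℝ) : ℂ) * Complex.I) (by simp)).2]
    congr 1; push_cast; ring
  have hinv := mellinInv_mellin_eq (-3) (fun t => (Dfun t : ℂ)) hx0 ?_ ?_ (Dfun_cont x hx)
  · rw [← hinv, mellinInv]
    have e1 : ∫ y : ℝ, (x : ℂ) ^ (-(((-3 : ℝ) : ℂ) + y * Complex.I)) • mellin (fun t => (Dfun t : ℂ)) (((-3 : ℝ) : ℂ) + y * Complex.I)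
        = ∫ y : ℝ, H (((2 : ℝ) : ℂ) + ((-y : ℝ) : ℂ) * Complex.I) := by
      refine MeasureTheory.integral_congr_ae (Filter.Eventually.of_forall fun y => ?_)
      simp only [hmel, hH, smul_eq_mul]
      congr 2
      push_cast; ring
    rw [e1, MeasureTheory.integral_neg_eq_self (fun y : ℝ => H (((2 : ℝ) : ℂ) + (y : ℂ) * Complex.I)), ← hcs]
    simp [Complex.real_smul]
    rfl
  · have := (mellin_D 2 (by simp)).1
    convert this using 1
    push_cast; ring
  · unfold Complex.VerticalIntegrable
    simp_rw [hmel]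
    exact hP2.comp_neg

lemma cpow_diff_bound2 (u v : ℝ) (hu : 0 < u) (huv : u ≤ v) (s : ℂ) (hs : 0 < s.re) :
    ‖(v : ℂ) ^ (s + 1) - (u : ℂ) ^ (s + 1)‖ ≤ ‖s + 1‖ * v ^ s.re * (v - u) := by
  have h2 : s + 1 ≠ 0 := by intro h; have := congrArg Complex.re h; simp at this; linarith
  have h := norm_image_sub_le_of_norm_deriv_le_segment' (a := u) (b := v)
    (f := fun u : ℝ => (u : ℂ) ^ (s + 1)) (f' := fun u : ℝ => (s + 1) * (u : ℂ) ^ (s + 1 - 1))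
    (C := ‖s + 1‖ * v ^ s.re) ?_ ?_ v ⟨huv, le_rfl⟩
  · exact h
  · intro w hw
    have hw0 : 0 < w := hu.trans_le hw.1
    exact (hasDerivAt_ofReal_cpow_const (x := w) (r := s + 1) hw0.ne' h2).hasDerivWithinAt
  · intro w hw
    have hw0 : 0 < w := hu.trans_le hw.1
    rw [norm_mul, Complex.norm_cpow_eq_rpow_re_of_pos hw0]
    gcongr ?_ * ?_
    simp only [add_sub_cancel_right]
    exact Real.rpow_le_rpow hw0.le hw.2.le hs.le

lemma D_diff (hRH : RiemannHypothesis) : ∃ K : ℝ, 0 < K ∧ ∀ u v : ℝ, 1 < u → u ≤ v →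
    |Dfun v - Dfun u| ≤ K * ((v - u) ^ (9 / 10 : ℝ) * v ^ (13 / 20 : ℝ)) := by
  obtain ⟨K, hK0, hK⟩ := PhiZ_bound hRH
  set J := ∫ y : ℝ, (1 + ‖y‖) ^ (-(21 / 20) : ℝ) with hJ
  have hi : MeasureTheory.Integrable (fun y : ℝ => (1 + ‖y‖) ^ (-(21 / 20) : ℝ)) :=
    integrable_one_add_norm (by simp; norm_num)
  have hJ0 : 0 ≤ J := MeasureTheory.integral_nonneg fun y => by positivity
  refine ⟨6 * K * J + 1, by positivity, ?_⟩
  intro u v hu huv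
  have hv0 : 0 < v := by linarith
  obtain ⟨i1, e1⟩ := D_formula hRH u hu
  obtain ⟨i2, e2⟩ := D_formula hRH v (by linarith)
  set W := (v - u) ^ (9 / 10 : ℝ) * v ^ (13 / 20 : ℝ) with hW
  have hvu : 0 ≤ v - u := by linarith
  have hW0 : 0 ≤ W := by positivity
  have hbd : ∀ y : ℝ, ‖(v : ℂ) ^ (((11 / 20 : ℝ) : ℂ) + y * Complex.I + 1) * PhiZ (((11 / 20 : ℝ) : ℂ) + y * Complex.I)
      - (u : ℂ) ^ (((11 / 20 : ℝ) : ℂ) + y * Complex.I + 1) * PhiZ (((11 / 20 : ℝ) : ℂ) + y * Complex.I)‖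
      ≤ (6 * K * W) * (1 + ‖y‖) ^ (-(21 / 20) : ℝ) := by
    intro y
    set s : ℂ := ((11 / 20 : ℝ) : ℂ) + y * Complex.I with hs
    have hre : s.re = 11 / 20 := by simp [hs]
    have him : s.im = y := by simp [hs]
    rw [← sub_mul, norm_mul]
    have hP := hK s hre.ge (by rw [hre]; norm_num)
    rw [him] at hP
    have b1 := cpow_diff_bound2 u v (by linarith) huv s (by rw [hre]; norm_num)
    rw [hre] at b1
    have b2 : ‖(v : ℂ) ^ (s + 1) - (u : ℂ) ^ (s + 1)‖ ≤ 2 * v ^ (31 / 20 : ℝ) := by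
      refine (norm_sub_le _ _).trans ?_
      rw [Complex.norm_cpow_eq_rpow_re_of_pos hv0, Complex.norm_cpow_eq_rpow_re_of_pos (by linarith)]
      have e : (s + 1).re = 31 / 20 := by simp [hre]; norm_num
      rw [e]
      have := Real.rpow_le_rpow (by linarith) huv (show (0 : ℝ) ≤ 31 / 20 by norm_num)
      linarith
    have b3 : ‖s + 1‖ ≤ 3 * (1 + ‖y‖) := by
      have : ‖s‖ ≤ 11 / 20 + ‖y‖ := by
        rw [hs]
        refine (norm_add_le _ _).trans ?_
        rw [norm_mul, Complex.norm_real, Complex.norm_real, Complex.norm_I, mul_one]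
        norm_num
      have h4 : ‖s + 1‖ ≤ ‖s‖ + 1 := (norm_add_le _ _).trans (by simp)
      linarith [norm_nonneg y]
    set Q := ‖(v : ℂ) ^ (s + 1) - (u : ℂ) ^ (s + 1)‖ with hQ
    have hQ0 : 0 ≤ Q := norm_nonneg _
    have b4 : Q ≤ 6 * (1 + ‖y‖) ^ (9 / 10 : ℝ) * W := by
      have c1 : Q ^ (9 / 10 : ℝ) ≤ (3 * (1 + ‖y‖) * v ^ (11 / 20 : ℝ) * (v - u)) ^ (9 / 10 : ℝ) := by
        refine Real.rpow_le_rpow hQ0 (b1.trans ?_) (by norm_num)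
        gcongr
      have c2 : Q ^ (1 / 10 : ℝ) ≤ (2 * v ^ (31 / 20 : ℝ)) ^ (1 / 10 : ℝ) :=
        Real.rpow_le_rpow hQ0 b2 (by norm_num)
      have c3 : Q = Q ^ (9 / 10 : ℝ) * Q ^ (1 / 10 : ℝ) := by
        rw [← Real.rpow_add_of_nonneg hQ0 (by norm_num) (by norm_num)]; norm_num
      rw [Real.mul_rpow (by positivity) (by positivity), Real.mul_rpow (by positivity) (by positivity),
        Real.mul_rpow (by positivity) (by positivity), ← Real.rpow_mul hv0.le] at c1
      rw [Real.mul_rpow (by positivity) (by positivity), ← Real.rpow_mul hv0.le] at c2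
      have d1 : (3 : ℝ) ^ (9 / 10 : ℝ) ≤ 3 := by
        conv_rhs => rw [← Real.rpow_one 3]
        exact Real.rpow_le_rpow_of_exponent_le (by norm_num) (by norm_num)
      have d2 : (2 : ℝ) ^ (1 / 10 : ℝ) ≤ 2 := by
        conv_rhs => rw [← Real.rpow_one 2]
        exact Real.rpow_le_rpow_of_exponent_le (by norm_num) (by norm_num)
      have d3 : v ^ (13 / 20 : ℝ) = v ^ (11 / 20 * (9 / 10) : ℝ) * v ^ (31 / 20 * (1 / 10) : ℝ) := by
        rw [← Real.rpow_add hv0]; norm_num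
      rw [c3]
      calc Q ^ (9 / 10 : ℝ) * Q ^ (1 / 10 : ℝ) ≤ (3 ^ (9 / 10 : ℝ) * (1 + ‖y‖) ^ (9 / 10 : ℝ) * v ^ (11 / 20 * (9 / 10) : ℝ) * (v - u) ^ (9 / 10 : ℝ)) *
            (2 ^ (1 / 10 : ℝ) * v ^ (31 / 20 * (1 / 10) : ℝ)) := by gcongr
        _ ≤ (3 * (1 + ‖y‖) ^ (9 / 10 : ℝ) * v ^ (11 / 20 * (9 / 10) : ℝ) * (v - u) ^ (9 / 10 : ℝ)) *
            (2 * v ^ (31 / 20 * (1 / 10) : ℝ)) := by gcongr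
        _ = _ := by rw [hW, d3]; ring
    have hyp : 0 < 1 + ‖y‖ := by positivity
    have d4 : (1 + ‖y‖) ^ (-(21 / 20) : ℝ) = (1 + ‖y‖) ^ (9 / 10 : ℝ) * (1 + ‖y‖) ^ (-(39 / 20) : ℝ) := by
      rw [← Real.rpow_add hyp]; norm_num
    calc Q * ‖PhiZ s‖ ≤ (6 * (1 + ‖y‖) ^ (9 / 10 : ℝ) * W) * (K * (1 + |y|) ^ (-(39 / 20) : ℝ)) := by gcongr
      _ = _ := by rw [d4, Real.norm_eq_abs]; ring
  have key : ‖((Dfun v - Dfun u : ℝ) : ℂ)‖ ≤ 6 * K * W * J := by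
    have e3 : ((Dfun v - Dfun u : ℝ) : ℂ) = (1 / (2 * Real.pi) : ℂ) * ∫ y : ℝ, ((v : ℂ) ^ (((11 / 20 : ℝ) : ℂ) + y * Complex.I + 1) * PhiZ (((11 / 20 : ℝ) : ℂ) + y * Complex.I)
      - (u : ℂ) ^ (((11 / 20 : ℝ) : ℂ) + y * Complex.I + 1) * PhiZ (((11 / 20 : ℝ) : ℂ) + y * Complex.I)) := by
      rw [MeasureTheory.integral_sub i2 i1, mul_sub, ← e1, ← e2]; push_cast; rfl
    rw [e3, norm_mul]
    have n1 : ‖(1 / (2 * Real.pi) : ℂ)‖ ≤ 1 := by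
      have : (1 / (2 * Real.pi) : ℂ) = ((1 / (2 * Real.pi) : ℝ) : ℂ) := by push_cast; rfl
      rw [this, Complex.norm_real, Real.norm_of_nonneg (by positivity)]
      rw [div_le_one (by positivity)]
      linarith [Real.pi_gt_three]
    have n2 := MeasureTheory.norm_integral_le_of_norm_le (hi.const_mul (6 * K * W)) (Filter.Eventually.of_forall hbd)
    rw [MeasureTheory.integral_const_mul] at n2
    calc _ ≤ 1 * (6 * K * W * J) := by gcongr
      _ = _ := one_mul _
  rw [Complex.norm_real, Real.norm_eq_abs] at key
  refine key.trans ?_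
  nlinarith

lemma psi1_lower (a b : ℝ) (ha : 0 ≤ a) (hab : a ≤ b) : (b - a) * Chebyshev.psi a ≤ psi1 b - psi1 a := by
  have h : ∑ n ∈ Finset.Icc 1 ⌊a⌋₊, ArithmeticFunction.vonMangoldt n * (b - n) ≤ psi1 b := by
    refine Finset.sum_le_sum_of_subset_of_nonneg (Finset.Icc_subset_Icc le_rfl (Nat.floor_le_floor hab)) ?_
    intro n hn _
    have := (Nat.le_floor_iff (ha.trans hab)).1 (Finset.mem_Icc.1 hn).2
    exact mul_nonneg ArithmeticFunction.vonMangoldt_nonneg (by linarith)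
  have e : (b - a) * Chebyshev.psi a = ∑ n ∈ Finset.Icc 1 ⌊a⌋₊, ArithmeticFunction.vonMangoldt n * (b - n) - psi1 a := by
    rw [psi_Icc, psi1, ← Finset.sum_sub_distrib, Finset.mul_sum]
    exact Finset.sum_congr rfl fun n _ => by ring
  linarith

lemma psi1_upper (a b : ℝ) (ha : 0 ≤ a) (hab : a ≤ b) : psi1 b - psi1 a ≤ (b - a) * Chebyshev.psi b := by
  have h : ∑ n ∈ Finset.Icc 1 ⌊b⌋₊, ArithmeticFunction.vonMangoldt n * (a - n) ≤ psi1 a := by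
    rw [← Finset.sum_sdiff (Finset.Icc_subset_Icc le_rfl (Nat.floor_le_floor hab)), psi1]
    have : ∑ x ∈ Finset.Icc 1 ⌊b⌋₊ \ Finset.Icc 1 ⌊a⌋₊, ArithmeticFunction.vonMangoldt x * (a - x) ≤ 0 := by
      refine Finset.sum_nonpos fun n hn => ?_
      have h3 : ¬ n ≤ ⌊a⌋₊ := fun h => (Finset.mem_sdiff.1 hn).2 (Finset.mem_Icc.2 ⟨(Finset.mem_Icc.1 (Finset.mem_sdiff.1 hn).1).1, h⟩)
      have h4 : a < n := (Nat.floor_lt ha).1 (not_le.1 h3)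
      exact mul_nonpos_of_nonneg_of_nonpos ArithmeticFunction.vonMangoldt_nonneg (by linarith)
    linarith
  have e : (b - a) * Chebyshev.psi b = psi1 b - ∑ n ∈ Finset.Icc 1 ⌊b⌋₊, ArithmeticFunction.vonMangoldt n * (a - n) := by
    rw [psi_Icc, psi1, ← Finset.sum_sub_distrib, Finset.mul_sum]
    exact Finset.sum_congr rfl fun n _ => by ring
  linarith

lemma psi_asymp (hRH : RiemannHypothesis) : ∃ K : ℝ, 0 < K ∧ ∀ x : ℝ, 4 ≤ x →
    |Chebyshev.psi x - x| ≤ K * x ^ (3 / 5 : ℝ) := by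
  obtain ⟨K, hK0, hK⟩ := D_diff hRH
  refine ⟨4 * K + 2, by positivity, ?_⟩
  intro x hx
  have hx0 : 0 < x := by linarith
  set P := x ^ (3 / 5 : ℝ) with hP
  have hP1 : 1 ≤ P := Real.one_le_rpow (by linarith) (by norm_num)
  have hPx : P ≤ x := by
    calc P ≤ x ^ (1 : ℝ) := Real.rpow_le_rpow_of_exponent_le (by linarith) (by norm_num)
      _ = x := Real.rpow_one x
  have key : ∀ v : ℝ, 0 < v → v ≤ 2 * x → (P / 2) ^ (9 / 10 : ℝ) * v ^ (13 / 20 : ℝ) ≤ 4 * (P / 2) * P := by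
    intro v hv0 hv
    calc (P / 2) ^ (9 / 10 : ℝ) * v ^ (13 / 20 : ℝ) ≤ P ^ (9 / 10 : ℝ) * (2 * x) ^ (13 / 20 : ℝ) := by
          gcongr; linarith
      _ ≤ P ^ (9 / 10 : ℝ) * (2 * x ^ (13 / 20 : ℝ)) := by
          rw [Real.mul_rpow (by norm_num) hx0.le]
          gcongr
          calc (2 : ℝ) ^ (13 / 20 : ℝ) ≤ 2 ^ (1 : ℝ) := Real.rpow_le_rpow_of_exponent_le (by norm_num) (by norm_num)
            _ = 2 := Real.rpow_one 2
      _ = 2 * x ^ (119 / 100 : ℝ) := by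
          rw [hP, ← Real.rpow_mul hx0.le, mul_left_comm, ← Real.rpow_add hx0]; norm_num
      _ ≤ 2 * x ^ (6 / 5 : ℝ) := by
          refine mul_le_mul_of_nonneg_left (Real.rpow_le_rpow_of_exponent_le (by linarith) (by norm_num)) (by norm_num)
      _ = 4 * (P / 2) * P := by
          rw [show (6 / 5 : ℝ) = 3 / 5 + 3 / 5 by norm_num, Real.rpow_add hx0]; ring
  have D1 : ∀ y : ℝ, 1 < y → Dfun y = psi1 y - (y - 1) ^ 2 / 2 := fun y hy => by rw [Dfun, if_pos hy]
  have hh : 0 < P / 2 := by positivity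
  have u1 := hK x (x + P / 2) (by linarith) (by linarith)
  have u2 := psi1_lower x (x + P / 2) (by linarith) (by linarith)
  have v1 := hK (x - P / 2) x (by linarith) (by linarith)
  have v2 := psi1_upper (x - P / 2) x (by linarith) (by linarith)
  have k1 := mul_le_mul_of_nonneg_left (key (x + P / 2) (by linarith) (by linarith)) hK0.le
  have k2 := mul_le_mul_of_nonneg_left (key x (by linarith) (by linarith)) hK0.le
  rw [D1 _ (by linarith), D1 _ (by linarith), add_sub_cancel_left] at u1
  rw [D1 _ (by linarith), D1 _ (by linarith), sub_sub_cancel] at v1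
  rw [add_sub_cancel_left] at u2
  rw [sub_sub_cancel] at v2
  have u3 := (abs_le.1 (u1.trans k1)).2
  have v3 := (abs_le.1 (v1.trans k2)).1
  rw [abs_le]
  constructor
  · refine le_of_mul_le_mul_left ?_ hh
    nlinarith
  · refine le_of_mul_le_mul_left ?_ hh
    nlinarith

lemma theta_asymp (hRH : RiemannHypothesis) : ∃ K : ℝ, 1 ≤ K ∧ ∀ x : ℝ, 0 < x →
    |Chebyshev.theta x - x| ≤ K * x ^ (3 / 5 : ℝ) := by
  obtain ⟨K, hK0, hK⟩ := psi_asymp hRH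
  obtain ⟨C, hC⟩ := Chebyshev.psi_sub_theta_le_mul_sqrt
  refine ⟨K + |C| + 12, by have := abs_nonneg C; linarith, ?_⟩
  intro x hx0
  have hC0 := abs_nonneg C
  have hP0 : 0 < x ^ (3 / 5 : ℝ) := by positivity
  rcases le_or_gt 4 x with hx | hx
  · have h1 := hK x hx
    have h2 := hC x
    have h3 := Chebyshev.theta_le_psi x
    have h4 : C * √x ≤ |C| * x ^ (3 / 5 : ℝ) := by
      refine mul_le_mul (le_abs_self C) ?_ (Real.sqrt_nonneg x) hC0
      rw [Real.sqrt_eq_rpow]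
      exact Real.rpow_le_rpow_of_exponent_le (by linarith) (by norm_num)
    rw [abs_le] at h1 ⊢
    constructor <;> nlinarith
  · have h1 : x ≤ 4 * x ^ (3 / 5 : ℝ) := by
      calc x = x ^ (2 / 5 : ℝ) * x ^ (3 / 5 : ℝ) := by
            rw [← Real.rpow_add hx0]; norm_num
        _ ≤ 4 * x ^ (3 / 5 : ℝ) := by
            gcongr
            calc x ^ (2 / 5 : ℝ) ≤ 4 ^ (2 / 5 : ℝ) := Real.rpow_le_rpow hx0.le hx.le (by norm_num)
              _ ≤ 4 ^ (1 : ℝ) := Real.rpow_le_rpow_of_exponent_le (by norm_num) (by norm_num)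
              _ = 4 := Real.rpow_one 4
    have h2 := Chebyshev.theta_nonneg x
    have h3 := Chebyshev.theta_le_log4_mul_x hx0.le
    have h4 : Real.log 4 ≤ 3 := by
      have := Real.log_le_sub_one_of_pos (show (0:ℝ) < 4 by norm_num); linarith
    rw [abs_le]
    constructor <;> nlinarith

lemma mertens_aux (K : ℝ) (hK1 : 1 ≤ K) (hK : ∀ x : ℝ, 0 < x → |Chebyshev.theta x - x| ≤ K * x ^ (3 / 5 : ℝ))
    (a b : ℝ) (ha : 0 < a) (hab : a ≤ b) :
    |(∑ p ∈ (Finset.Ioc ⌊a⌋₊ ⌊b⌋₊).filter Nat.Prime, Real.log p / p) - (Real.log b - Real.log a)|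
      ≤ 5 * K * a ^ (-(2 / 5) : ℝ) := by
  have hb : 0 < b := ha.trans_le hab
  have hdeq : deriv (fun x : ℝ => x⁻¹) = fun t : ℝ => -(t ^ 2)⁻¹ := by ext t; simp
  have hcont : ContinuousOn (fun t : ℝ => -(t ^ 2)⁻¹) (Set.Icc a b) := by
    refine ContinuousOn.neg (ContinuousOn.inv₀ (by fun_prop) ?_)
    intro t ht; have := ha.trans_le ht.1; positivity
  have hint : MeasureTheory.IntegrableOn (deriv (fun x : ℝ => x⁻¹)) (Set.Icc a b) := by
    rw [hdeq]; exact hcont.integrableOn_Icc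
  have hth : ∀ t : ℝ, ∑ k ∈ Finset.Icc 0 ⌊t⌋₊, (if k.Prime then Real.log k else 0) = Chebyshev.theta t := by
    intro t; rw [Chebyshev.theta_eq_sum_Icc, Finset.sum_filter]
  have hI2 := integrableOn_mul_sum_Icc (m := 0) (fun k : ℕ => (if k.Prime then Real.log k else 0 : ℝ)) ha.le hint
  have h := sum_mul_eq_sub_sub_integral_mul (f := fun x : ℝ => x⁻¹) (fun k : ℕ => (if k.Prime then Real.log k else 0 : ℝ)) ha.le hab
    (fun t ht => by have := ha.trans_le ht.1; exact differentiableAt_inv this.ne') hint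
  simp only [hth] at h hI2
  rw [← intervalIntegral.integral_of_le hab] at h
  have hs : (∑ p ∈ (Finset.Ioc ⌊a⌋₊ ⌊b⌋₊).filter Nat.Prime, Real.log p / p) =
      ∑ k ∈ Finset.Ioc ⌊a⌋₊ ⌊b⌋₊, (k : ℝ)⁻¹ * (if k.Prime then Real.log k else 0) := by
    rw [Finset.sum_filter]
    refine Finset.sum_congr rfl fun k _ => ?_
    split_ifs <;> simp [div_eq_inv_mul]
  have hi1 : IntervalIntegrable (fun t => deriv (fun x : ℝ => x⁻¹) t * Chebyshev.theta t) MeasureTheory.volume a b :=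
    (intervalIntegrable_iff_integrableOn_Icc_of_le hab).2 hI2
  have h0 : (0 : ℝ) ∉ Set.uIcc a b := by
    rw [Set.uIcc_of_le hab]; intro h; exact absurd h.1 (not_le.2 ha)
  have hi2 : IntervalIntegrable (fun t : ℝ => t⁻¹) MeasureTheory.volume a b :=
    (ContinuousOn.inv₀ continuousOn_id (fun t ht => by intro h; simp at h; exact h0 (h ▸ ht))).intervalIntegrable
  have hlog : ∫ t in a..b, t⁻¹ = Real.log b - Real.log a := by
    rw [integral_inv h0, Real.log_div hb.ne' ha.ne']
  have hbd : |(∫ t in a..b, deriv (fun x : ℝ => x⁻¹) t * Chebyshev.theta t) + (Real.log b - Real.log a)|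
      ≤ 5 / 2 * K * a ^ (-(2 / 5) : ℝ) := by
    rw [← hlog, ← intervalIntegral.integral_add hi1 hi2, ← Real.norm_eq_abs]
    have hr : ∫ t in a..b, K * t ^ (-(7 / 5) : ℝ) = K * ((b ^ (-(2 / 5) : ℝ) - a ^ (-(2 / 5) : ℝ)) / (-(2 / 5))) := by
      rw [intervalIntegral.integral_const_mul, integral_rpow (Or.inr ⟨by norm_num, h0⟩)]
      norm_num
    have hir : IntervalIntegrable (fun t : ℝ => K * t ^ (-(7 / 5) : ℝ)) MeasureTheory.volume a b :=
      (intervalIntegral.intervalIntegrable_rpow (Or.inr h0)).const_mul K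
    refine (intervalIntegral.norm_integral_le_of_norm_le hab (g := fun t : ℝ => K * t ^ (-(7 / 5) : ℝ))
      (Filter.Eventually.of_forall fun t ht => ?_) hir).trans ?_
    · have ht0 : 0 < t := ha.trans ht.1
      have e : deriv (fun x : ℝ => x⁻¹) t * Chebyshev.theta t + t⁻¹ = -((Chebyshev.theta t - t) / t ^ 2) := by
        rw [hdeq]; field_simp; ring
      rw [e, norm_neg, norm_div, Real.norm_eq_abs, Real.norm_eq_abs, abs_of_pos (show (0:ℝ) < t ^ 2 by positivity),
        div_le_iff₀ (by positivity), mul_assoc, ← Real.rpow_natCast, ← Real.rpow_add ht0]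
      rw [show (-(7 / 5) : ℝ) + ((2 : ℕ) : ℝ) = 3 / 5 by norm_num]
      exact hK t ht0
    · rw [hr]
      have : 0 < b ^ (-(2 / 5) : ℝ) := by positivity
      have e : K * ((b ^ (-(2 / 5) : ℝ) - a ^ (-(2 / 5) : ℝ)) / (-(2 / 5))) = 5 / 2 * K * (a ^ (-(2 / 5) : ℝ) - b ^ (-(2 / 5) : ℝ)) := by ring
      rw [e]
      gcongr; linarith
  have hE : ∀ t : ℝ, a ≤ t → |t⁻¹ * Chebyshev.theta t - 1| ≤ K * a ^ (-(2 / 5) : ℝ) := by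
    intro t ht
    have ht0 : 0 < t := ha.trans_le ht
    have e : t⁻¹ * Chebyshev.theta t - 1 = (Chebyshev.theta t - t) / t := by field_simp
    rw [e, abs_div, abs_of_pos ht0, div_le_iff₀ ht0]
    calc _ ≤ K * t ^ (3 / 5 : ℝ) := hK t ht0
      _ = K * t ^ (-(2 / 5) : ℝ) * t := by
        rw [mul_assoc, ← Real.rpow_add_one ht0.ne']; norm_num
      _ ≤ _ := by
        have : t ^ (-(2 / 5) : ℝ) ≤ a ^ (-(2 / 5) : ℝ) := Real.rpow_le_rpow_of_nonpos ha ht (by norm_num)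
        gcongr
  rw [hs, h]
  have e1 := abs_le.1 (hE a le_rfl)
  have e2 := abs_le.1 (hE b hab)
  have e3 := abs_le.1 hbd
  have : 0 < K * a ^ (-(2 / 5) : ℝ) := by positivity
  rw [abs_le]
  constructor <;> linarith

lemma key_small (K w l v r c α β : ℝ) (hK : 1 ≤ K) (hw : 1 ≤ w) (hl : 6 ≤ l) (hwl : 64 * K * l ≤ w ^ 2)
    (hr : 1 < r) (hr2 : r ≤ 2) (hc : c = 1 - 1 / r) (hv1 : v ≤ r - 1) (hv2 : c ≤ v) (hα0 : 0 ≤ α)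
    (hα : α ≤ 2 / w ^ 4) (hβ0 : 0 ≤ β) (hβ : β ≤ 2 * w ^ 4) :
    K * (w ^ 20 * c * α + w ^ 12 * β * (v + α)) ≤ w ^ 20 * c * v * v / l ∨
    K * (w ^ 20 * c * α + w ^ 12 * β * (v + α)) ≤ 8 * K * w ^ 15 := by
  have hw0 : 0 < w := by linarith
  obtain ⟨δ, hδ⟩ : ∃ δ, δ = r - 1 := ⟨_, rfl⟩
  have hδ0 : 0 < δ := by linarith
  have hr0 : 0 < r := by linarith
  have hc1 : c ≤ δ := by
    rw [hc, hδ]; rw [sub_le_iff_le_add]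
    have : r - 1 + 1 / r - 1 = (r - 1) ^ 2 / r := by field_simp; ring
    have : 0 ≤ (r - 1) ^ 2 / r := by positivity
    linarith
  have hc2 : δ / 2 ≤ c := by
    rw [hc, hδ]
    have : (1 - 1 / r) - (r - 1) / 2 = (r - 1) * (2 - r) / (2 * r) := by field_simp
    have : 0 ≤ (r - 1) * (2 - r) / (2 * r) := div_nonneg (mul_nonneg (by linarith) (by linarith)) (by linarith)
    linarith
  have hv0 : 0 < v := by linarith
  have hc0 : 0 < c := by linarith
  have hR : w ^ 20 * c * α + w ^ 12 * β * (v + α) ≤ 4 * δ * w ^ 16 + 4 * w ^ 12 := by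
    calc w ^ 20 * c * α + w ^ 12 * β * (v + α) ≤ w ^ 20 * δ * (2 / w ^ 4) + w ^ 12 * (2 * w ^ 4) * (δ + 2 / w ^ 4) := by
          gcongr; linarith
      _ = _ := by field_simp; ring
  have hK0 : 0 < K := by linarith
  rcases le_or_gt (δ * w) 1 with h | h
  · right
    have h1 : δ * w ^ 16 ≤ w ^ 15 := by
      calc δ * w ^ 16 = (δ * w) * w ^ 15 := by ring
        _ ≤ 1 * w ^ 15 := by gcongr
        _ = _ := one_mul _
    have h2 : w ^ 12 ≤ w ^ 15 := pow_le_pow_right₀ hw (by norm_num)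
    calc _ ≤ K * (8 * w ^ 15) := by gcongr; linarith
      _ = _ := by ring
  · left
    rw [le_div_iff₀ (by linarith)]
    have h2 : w ^ 12 ≤ δ * w ^ 16 := by
      calc w ^ 12 ≤ w ^ 12 * (δ * w) := le_mul_of_one_le_right (by positivity) h.le
        _ = δ * w ^ 13 := by ring
        _ ≤ δ * w ^ 16 := by gcongr <;> first | exact hw | norm_num
    calc _ ≤ K * (8 * (δ * w ^ 16)) * l := by gcongr; linarith
      _ = δ * w ^ 16 * (64 * K * l) / 8 := by ring
      _ ≤ δ * w ^ 16 * w ^ 2 / 8 := by gcongr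
      _ = δ * w ^ 18 * 1 / 8 := by ring
      _ ≤ δ * w ^ 18 * (δ * w) ^ 2 / 8 := by gcongr; nlinarith
      _ = w ^ 20 * (δ / 2) * (δ / 2) * (δ / 2) := by ring
      _ ≤ w ^ 20 * c * v * v := by gcongr <;> linarith

lemma key_large (K w l v r c α β : ℝ) (hK : 1 ≤ K) (hw : 1 ≤ w) (hl : 64 * K ≤ l) (hwl : 64 * K * l ≤ w ^ 2)
    (hr : 2 < r) (hc : c = 1 - 1 / r) (hv1 : 1 / 2 ≤ v) (hα0 : 0 ≤ α) (hα1 : α ≤ 1)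
    (hα : v ≤ l / 4 → α ≤ 1 / w ^ 2) (hβ0 : 0 ≤ β) (hβ : β ≤ w ^ 6) :
    K * (w ^ 20 * c * α + w ^ 12 * β * (v + α)) ≤ w ^ 20 * c * v * v / l := by
  have hw0 : 0 < w := by linarith
  have hr0 : 0 < r := by linarith
  have hK0 : 0 < K := by linarith
  have hl0 : 0 < l := by linarith
  have hc1 : c ≤ 1 := by rw [hc]; have : 0 < 1 / r := by positivity
                         linarith
  have hc2 : 1 / 2 ≤ c := by
    rw [hc]; have : 1 / r ≤ 1 / 2 := one_div_le_one_div_of_le (by norm_num) hr.le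
    linarith
  have hv0 : 0 < v := by linarith
  rw [le_div_iff₀ hl0]
  have hlow : w ^ 20 * v * v / 2 ≤ w ^ 20 * c * v * v := by
    calc w ^ 20 * v * v / 2 = w ^ 20 * (1 / 2) * v * v := by ring
      _ ≤ _ := by gcongr
  refine le_trans ?_ hlow
  rcases le_or_gt v (l / 4) with h | h
  · have hα' := hα h
    calc K * (w ^ 20 * c * α + w ^ 12 * β * (v + α)) * l
        ≤ K * (w ^ 20 * 1 * (1 / w ^ 2) + w ^ 12 * w ^ 6 * (v + 1)) * l := by gcongr
      _ = (v + 2) * w ^ 18 * K * l := by field_simp; ring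
      _ ≤ (5 * v) * w ^ 18 * K * l := by gcongr; linarith
      _ = v * w ^ 18 * (5 / 64) * (64 * K * l) := by ring
      _ ≤ v * w ^ 18 * (5 / 64) * w ^ 2 := by gcongr
      _ ≤ v * w ^ 18 * (v * (1 / 2)) * w ^ 2 := by
        have : 5 / 64 ≤ v * (1 / 2) := by linarith
        gcongr
      _ = _ := by ring
  · have h1 : 64 * K ≤ w ^ 2 := by nlinarith
    calc K * (w ^ 20 * c * α + w ^ 12 * β * (v + α)) * l
        ≤ K * (w ^ 20 * 1 * 1 + w ^ 12 * w ^ 6 * (v + 1)) * l := by gcongr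
      _ ≤ K * (w ^ 20 * 1 * 1 + w ^ 12 * w ^ 6 * (3 * v)) * l := by gcongr; linarith
      _ = w ^ 20 * (64 * K) * l / 64 + 3 / 64 * (64 * K) * w ^ 18 * v * l := by ring
      _ ≤ w ^ 20 * l * l / 64 + 3 / 64 * w ^ 2 * w ^ 18 * v * l := by gcongr
      _ = w ^ 20 * (l / 4) * (l / 4) / 4 + 3 / 16 * w ^ 20 * v * (l / 4) := by ring
      _ ≤ w ^ 20 * v * v / 4 + 3 / 16 * w ^ 20 * v * v := by gcongr
      _ ≤ _ := by nlinarith [show 0 ≤ w ^ 20 * v * v by positivity]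

noncomputable def Pset (a b : ℝ) : Finset ℕ := (Finset.Ioc ⌊a⌋₊ ⌊b⌋₊).filter Nat.Prime

lemma mem_Pset (a b : ℝ) (ha : 0 ≤ a) (hb : 0 ≤ b) (n : ℕ) : n ∈ Pset a b ↔ a < n ∧ (n : ℝ) ≤ b ∧ n.Prime := by
  rw [Pset, Finset.mem_filter, Finset.mem_Ioc, Nat.floor_lt ha, Nat.le_floor_iff hb, and_assoc]

lemma theta_sub_eq (a b : ℝ) (hab : a ≤ b) :
    Chebyshev.theta b - Chebyshev.theta a = ∑ q ∈ Pset a b, Real.log q := by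
  rw [Chebyshev.theta, Chebyshev.theta, Pset, sub_eq_iff_eq_add, add_comm]
  rw [Finset.sum_filter, Finset.sum_filter, Finset.sum_filter]
  exact (Finset.sum_Ioc_consecutive _ (Nat.zero_le _) (Nat.floor_le_floor hab)).symm

lemma NALGV_sum (r σ x : ℝ) (hr : 1 < r) (hx : 0 < x) :
    NALGV r σ x = ∑ p ∈ Pset (r ^ (σ - 1) * Real.sqrt x) (r ^ σ * Real.sqrt x), (Pset (x / (r * p)) (x / p)).card := by
  have hr0 : 0 < r := by linarith
  have hS : 0 < Real.sqrt x := Real.sqrt_pos.2 hx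
  rw [← Finset.card_sigma, ← Finset.card_map (Equiv.sigmaEquivProd ℕ ℕ).toEmbedding, NALGV]
  refine Nat.subtype_card _ ?_
  rintro ⟨p, q⟩
  rw [Finset.mem_map_equiv]
  simp only [Equiv.sigmaEquivProd_symm_apply, Finset.mem_sigma]
  rw [mem_Pset _ _ (by positivity) (by positivity), mem_Pset _ _ (by positivity) (by positivity)]
  tauto

lemma pair_bounds (r σ x p q : ℝ) (hr : 1 < r) (hx : 0 < x) (hσ0 : 0 ≤ σ) (hσ1 : σ ≤ 1)
    (hl : 2 * (1 + σ) * Real.log r < Real.log x) (hp : 1 ≤ p) (hq : 1 ≤ q)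
    (h1 : r ^ (σ - 1) * Real.sqrt x < p) (h2 : p ≤ r ^ σ * Real.sqrt x) (h3 : x / (r * p) < q) (h4 : q ≤ x / p) :
    Real.log p * Real.log q ≤ Real.log x ^ 2 / 4 ∧
    Real.log x / 2 * (Real.log x / 2 - (1 + σ) * Real.log r) ≤ Real.log p * Real.log q := by
  have hr0 : 0 < r := by linarith
  have hS : 0 < Real.sqrt x := Real.sqrt_pos.2 hx
  have hp0 : 0 < p := by linarith
  have hq0 : 0 < q := by linarith
  have hv : 0 < Real.log r := Real.log_pos hr
  have a1 := Real.log_lt_log (by positivity) h1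
  have a2 := Real.log_le_log hp0 h2
  have a3 := Real.log_lt_log (by positivity) h3
  have a4 := Real.log_le_log hq0 h4
  rw [Real.log_mul (by positivity) hS.ne', Real.log_rpow hr0, Real.log_sqrt hx.le] at a1 a2
  rw [Real.log_div hx.ne' (by positivity), Real.log_mul hr0.ne' hp0.ne'] at a3
  rw [Real.log_div hx.ne' hp0.ne'] at a4
  have b1 := Real.log_nonneg hp
  have b2 := Real.log_nonneg hq
  generalize Real.log p = a at *
  generalize Real.log q = b at *
  generalize Real.log r = v at *
  generalize Real.log x = l at *
  constructor
  · nlinarith [sq_nonneg (a - b)]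
  · have h5 : a * (l - v - a) ≤ a * b := mul_le_mul_of_nonneg_left (by linarith) b1
    refine le_trans ?_ h5
    obtain ⟨t, ht⟩ : ∃ t, t = a - l / 2 := ⟨_, rfl⟩
    have ea : a = l / 2 + t := by linarith
    subst ea
    have ht1 : t ≤ σ * v := by linarith
    have ht2 : 0 ≤ t + v := by nlinarith
    have hm : t * (t + v) ≤ σ * v * (l / 2) := by
      rcases le_or_gt 0 t with h | h
      · exact mul_le_mul ht1 (by nlinarith) ht2 (by positivity)
      · have : 0 ≤ σ * v * (l / 2) := by
          have : 0 < l := by nlinarith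
          positivity
        nlinarith
    nlinarith

noncomputable def Tsum (r σ x : ℝ) : ℝ :=
  ∑ p ∈ Pset (r ^ (σ - 1) * Real.sqrt x) (r ^ σ * Real.sqrt x), Real.log p * ∑ q ∈ Pset (x / (r * p)) (x / p), Real.log q

lemma N_T_bounds (r σ x : ℝ) (hr : 1 < r) (hx : 0 < x) (hσ0 : 0 ≤ σ) (hσ1 : σ ≤ 1)
    (hl : 2 * (1 + σ) * Real.log r < Real.log x) :
    Tsum r σ x ≤ (NALGV r σ x : ℝ) * (Real.log x ^ 2 / 4) ∧
    (NALGV r σ x : ℝ) * (Real.log x / 2 * (Real.log x / 2 - (1 + σ) * Real.log r)) ≤ Tsum r σ x := by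
  have hr0 : 0 < r := by linarith
  have hS : 0 < Real.sqrt x := Real.sqrt_pos.2 hx
  have key : ∀ p ∈ Pset (r ^ (σ - 1) * Real.sqrt x) (r ^ σ * Real.sqrt x), ∀ q ∈ Pset (x / (r * p)) (x / p),
      Real.log p * Real.log q ≤ Real.log x ^ 2 / 4 ∧
      Real.log x / 2 * (Real.log x / 2 - (1 + σ) * Real.log r) ≤ Real.log p * Real.log q := by
    intro p hp q hq
    rw [mem_Pset _ _ (by positivity) (by positivity)] at hp hq
    exact pair_bounds r σ x p q hr hx hσ0 hσ1 hl (by exact_mod_cast hp.2.2.one_le) (by exact_mod_cast hq.2.2.one_le)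
      hp.1 hp.2.1 hq.1 hq.2.1
  rw [NALGV_sum r σ x hr hx, Tsum]
  push_cast
  rw [Finset.sum_mul, Finset.sum_mul]
  constructor
  · refine Finset.sum_le_sum fun p hp => ?_
    rw [Finset.mul_sum, ← nsmul_eq_mul]
    exact Finset.sum_le_card_nsmul _ _ _ fun q hq => (key p hp q hq).1
  · refine Finset.sum_le_sum fun p hp => ?_
    rw [Finset.mul_sum, ← nsmul_eq_mul]
    exact Finset.card_nsmul_le_sum _ _ _ fun q hq => (key p hp q hq).2

lemma N_triv (r σ x : ℝ) (hr : 1 < r) (hx : 1 ≤ x) (hb : r ^ σ * Real.sqrt x ≤ x) :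
    (NALGV r σ x : ℝ) ≤ x * x := by
  have hr0 : 0 < r := by linarith
  have hS : 0 < Real.sqrt x := Real.sqrt_pos.2 (by linarith)
  have hcard : ∀ a b : ℝ, 0 ≤ b → ((Pset a b).card : ℝ) ≤ b := by
    intro a b hb
    calc ((Pset a b).card : ℝ) ≤ ⌊b⌋₊ := by
          refine Nat.cast_le.2 ((Finset.card_filter_le _ _).trans ?_)
          rw [Nat.card_Ioc]; omega
      _ ≤ b := Nat.floor_le hb
  rw [NALGV_sum r σ x hr (by linarith)]
  push_cast
  have h : ∀ p ∈ Pset (r ^ (σ - 1) * Real.sqrt x) (r ^ σ * Real.sqrt x), ((Pset (x / (r * p)) (x / p)).card : ℝ) ≤ x := by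
    intro p hp
    rw [mem_Pset _ _ (by positivity) (by positivity)] at hp
    refine (hcard _ _ (by positivity)).trans (div_le_self (by linarith) (by exact_mod_cast hp.2.2.one_le))
  refine (Finset.sum_le_card_nsmul _ _ _ h).trans ?_
  rw [nsmul_eq_mul]
  gcongr
  exact (hcard _ _ (by positivity)).trans hb

lemma T_bound (K : ℝ) (hK1 : 1 ≤ K) (hK : ∀ x : ℝ, 0 < x → |Chebyshev.theta x - x| ≤ K * x ^ (3 / 5 : ℝ))
    (r σ x : ℝ) (hr : 1 < r) (hx : 0 < x) :
    |Tsum r σ x - x * (1 - 1 / r) * Real.log r| ≤ 10 * K ^ 2 * (x * (1 - 1 / r) * (r ^ (σ - 1) * Real.sqrt x) ^ (-(2 / 5) : ℝ)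
      + x ^ (3 / 5 : ℝ) * (r ^ σ * Real.sqrt x) ^ (2 / 5 : ℝ) * (Real.log r + (r ^ (σ - 1) * Real.sqrt x) ^ (-(2 / 5) : ℝ))) := by
  have hr0 : 0 < r := by linarith
  have hS : 0 < Real.sqrt x := Real.sqrt_pos.2 hx
  have hv : 0 < Real.log r := Real.log_pos hr
  set A := r ^ (σ - 1) * Real.sqrt x with hA
  set b := r ^ σ * Real.sqrt x with hb
  have hA0 : 0 < A := by positivity
  have hb0 : 0 < b := by positivity
  have hbA : b = r * A := by
    rw [hb, hA, Real.rpow_sub_one hr0.ne']; field_simp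
  have hAb : A ≤ b := by rw [hbA]; nlinarith
  have hm := mertens_aux K hK1 hK A b hA0 hAb
  rw [hbA, Real.log_mul hr0.ne' hA0.ne', add_sub_cancel_right, ← hbA] at hm
  change |(∑ p ∈ Pset A b, Real.log p / p) - Real.log r| ≤ _ at hm
  set M := ∑ p ∈ Pset A b, Real.log p / p with hM
  set α := A ^ (-(2 / 5) : ℝ) with hα
  have hα0 : 0 < α := by positivity
  have hc0 : 0 < 1 - 1 / r := by
    rw [sub_pos, div_lt_one hr0]; exact hr
  have h1 : |Tsum r σ x - x * (1 - 1 / r) * M| ≤ 2 * K * x ^ (3 / 5 : ℝ) * b ^ (2 / 5 : ℝ) * M := by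
    rw [Tsum, hM, Finset.mul_sum, Finset.mul_sum, ← Finset.sum_sub_distrib]
    refine (Finset.abs_sum_le_sum_abs _ _).trans (Finset.sum_le_sum fun p hp => ?_)
    rw [mem_Pset _ _ hA0.le hb0.le] at hp
    have hp0 : (0 : ℝ) < p := by exact_mod_cast hp.2.2.pos
    have hp1 : (1 : ℝ) ≤ p := by exact_mod_cast hp.2.2.one_le
    have hlp := Real.log_nonneg hp1
    have hxr : x / (r * p) ≤ x / p := by
      apply div_le_div_of_nonneg_left hx.le hp0; nlinarith
    rw [← theta_sub_eq _ _ hxr]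
    have e : Real.log p * (Chebyshev.theta (x / p) - Chebyshev.theta (x / (r * p))) - x * (1 - 1 / r) * (Real.log p / p)
        = Real.log p * ((Chebyshev.theta (x / p) - x / p) - (Chebyshev.theta (x / (r * p)) - x / (r * p))) := by
      field_simp; ring
    rw [e, abs_mul, abs_of_nonneg hlp]
    have k1 := hK (x / p) (by positivity)
    have k2 := hK (x / (r * p)) (by positivity)
    have k3 : (x / (r * p)) ^ (3 / 5 : ℝ) ≤ (x / p) ^ (3 / 5 : ℝ) := Real.rpow_le_rpow (by positivity) hxr (by norm_num)
    have k4 : |(Chebyshev.theta (x / p) - x / p) - (Chebyshev.theta (x / (r * p)) - x / (r * p))| ≤ 2 * K * (x / p) ^ (3 / 5 : ℝ) := by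
      refine (abs_sub _ _).trans ?_
      have := mul_le_mul_of_nonneg_left k3 (show 0 ≤ K by linarith)
      linarith
    have k5 : (x / p) ^ (3 / 5 : ℝ) ≤ x ^ (3 / 5 : ℝ) * b ^ (2 / 5 : ℝ) / p := by
      rw [Real.div_rpow hx.le hp0.le, div_le_div_iff₀ (by positivity) hp0, mul_assoc]
      gcongr
      calc (p : ℝ) = (p : ℝ) ^ (2 / 5 : ℝ) * (p : ℝ) ^ (3 / 5 : ℝ) := by rw [← Real.rpow_add hp0]; norm_num
        _ ≤ _ := by gcongr; exact hp.2.1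
    calc _ ≤ Real.log p * (2 * K * (x ^ (3 / 5 : ℝ) * b ^ (2 / 5 : ℝ) / p)) := by
          refine mul_le_mul_of_nonneg_left (k4.trans ?_) hlp
          gcongr
      _ = _ := by ring
  have hm' := abs_le.1 hm
  have h2 : |x * (1 - 1 / r) * M - x * (1 - 1 / r) * Real.log r| ≤ x * (1 - 1 / r) * (5 * K * α) := by
    rw [← mul_sub, abs_mul, abs_of_pos (by positivity)]
    gcongr
  have h3 : 2 * K * x ^ (3 / 5 : ℝ) * b ^ (2 / 5 : ℝ) * M ≤ 2 * K * x ^ (3 / 5 : ℝ) * b ^ (2 / 5 : ℝ) * (5 * K * (Real.log r + α)) := by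
    gcongr
    nlinarith
  have h4 := abs_sub_le (Tsum r σ x) (x * (1 - 1 / r) * M) (x * (1 - 1 / r) * Real.log r)
  have h5 : x * (1 - 1 / r) * (5 * K * α) ≤ 10 * K ^ 2 * (x * (1 - 1 / r) * α) := by
    have h6 : 0 < x * (1 - 1 / r) * α := by positivity
    have h7 : 5 * K ≤ 10 * K ^ 2 := by nlinarith
    calc x * (1 - 1 / r) * (5 * K * α) = 5 * K * (x * (1 - 1 / r) * α) := by ring
      _ ≤ _ := mul_le_mul_of_nonneg_right h7 h6.le
  have h8 : 2 * K * x ^ (3 / 5 : ℝ) * b ^ (2 / 5 : ℝ) * (5 * K * (Real.log r + α)) = 10 * K ^ 2 * (x ^ (3 / 5 : ℝ) * b ^ (2 / 5 : ℝ) * (Real.log r + α)) := by ring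
  rw [mul_add]
  linarith

lemma T_key (K : ℝ) (hK1 : 1 ≤ K) (r σ x : ℝ) (hr : 1 < r) (hσ0 : 0 ≤ σ) (hσ1 : σ ≤ 1)
    (hl : 2 * (1 + σ) * Real.log r < Real.log x) (hSr : 1 ≤ Real.sqrt x / r) (hx1 : 1 < x)
    (hl64 : 64 * K ≤ Real.log x) (hwl : 64 * K * Real.log x ≤ x ^ (1 / 10 : ℝ))
    (hT : |Tsum r σ x - x * (1 - 1 / r) * Real.log r| ≤ K * (x * (1 - 1 / r) * (r ^ (σ - 1) * Real.sqrt x) ^ (-(2 / 5) : ℝ)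
      + x ^ (3 / 5 : ℝ) * (r ^ σ * Real.sqrt x) ^ (2 / 5 : ℝ) * (Real.log r + (r ^ (σ - 1) * Real.sqrt x) ^ (-(2 / 5) : ℝ)))) :
    |Tsum r σ x - x * (1 - 1 / r) * Real.log r| ≤ x * (1 - 1 / r) * Real.log r * Real.log r / Real.log x ∨
    (r ≤ 2 ∧ |Tsum r σ x - x * (1 - 1 / r) * Real.log r| ≤ 8 * K * x ^ (3 / 4 : ℝ)) := by
  have hx0 : 0 < x := by linarith
  have hr0 : 0 < r := by linarith
  have hv : 0 < Real.log r := Real.log_pos hr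
  have hvr : Real.log r ≤ r - 1 := Real.log_le_sub_one_of_pos hr0
  have hvc : 1 - 1 / r ≤ Real.log r := by
    have := Real.one_sub_inv_le_log_of_pos hr0; rwa [one_div]
  have hS : Real.sqrt x = x ^ (1 / 2 : ℝ) := Real.sqrt_eq_rpow x
  have hS0 : 0 < Real.sqrt x := Real.sqrt_pos.2 hx0
  obtain ⟨w, hw⟩ : ∃ w, w = x ^ (1 / 20 : ℝ) := ⟨_, rfl⟩
  have hw1 : 1 ≤ w := by rw [hw]; exact Real.one_le_rpow hx1.le (by norm_num)
  have hw0 : 0 < w := by linarith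
  have hwn : ∀ (n : ℕ) (e : ℝ), e = n / 20 → x ^ e = w ^ n := by
    intro n e he
    rw [hw, ← Real.rpow_natCast, ← Real.rpow_mul hx0.le, he]; congr 1; ring
  have e20 : x = w ^ 20 := by rw [← hwn 20 1 (by norm_num), Real.rpow_one]
  have e12 := hwn 12 (3 / 5) (by norm_num)
  have e15 := hwn 15 (3 / 4) (by norm_num)
  have e2 := hwn 2 (1 / 10) (by norm_num)
  have e10 : Real.sqrt x = w ^ 10 := by rw [hS, hwn 10 (1 / 2) (by norm_num)]
  set A := r ^ (σ - 1) * Real.sqrt x with hA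
  set b := r ^ σ * Real.sqrt x with hb
  have hA0 : 0 < A := by positivity
  have hb0 : 0 < b := by positivity
  have hAS : Real.sqrt x / r ≤ A := by
    rw [hA, div_eq_inv_mul]
    gcongr
    rw [← Real.rpow_neg_one]
    exact Real.rpow_le_rpow_of_exponent_le hr.le (by linarith)
  have hA1 : 1 ≤ A := hSr.trans hAS
  set α := A ^ (-(2 / 5) : ℝ) with hα
  set β := b ^ (2 / 5 : ℝ) with hβ
  have hα0 : 0 < α := by positivity
  have hβ0 : 0 < β := by positivity
  have hα1 : α ≤ 1 := Real.rpow_le_one_of_one_le_of_nonpos hA1 (by norm_num)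
  rw [e12] at hT
  rw [e2] at hwl
  rcases le_or_gt r 2 with h | h
  · have hα2 : α ≤ 2 / w ^ 4 := by
      have h1 : Real.sqrt x / 2 ≤ A := (div_le_div_of_nonneg_left hS0.le hr0 h).trans hAS
      have h2 : α ≤ (Real.sqrt x / 2) ^ (-(2 / 5) : ℝ) := Real.rpow_le_rpow_of_nonpos (by positivity) h1 (by norm_num)
      refine h2.trans ?_
      rw [Real.rpow_neg (by positivity), Real.div_rpow hS0.le (by norm_num), hS, ← Real.rpow_mul hx0.le,
        hwn 4 (1 / 2 * (2 / 5)) (by norm_num), inv_div]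
      gcongr
      calc (2 : ℝ) ^ (2 / 5 : ℝ) ≤ 2 ^ (1 : ℝ) := Real.rpow_le_rpow_of_exponent_le (by norm_num) (by norm_num)
        _ = 2 := Real.rpow_one 2
    have hβ2 : β ≤ 2 * w ^ 4 := by
      have h1 : b ≤ 2 * Real.sqrt x := by
        rw [hb]; gcongr
        calc r ^ σ ≤ r ^ (1 : ℝ) := Real.rpow_le_rpow_of_exponent_le hr.le hσ1
          _ = r := Real.rpow_one r
          _ ≤ 2 := h
      have h2 : β ≤ (2 * Real.sqrt x) ^ (2 / 5 : ℝ) := Real.rpow_le_rpow hb0.le h1 (by norm_num)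
      refine h2.trans ?_
      rw [Real.mul_rpow (by norm_num) hS0.le, hS, ← Real.rpow_mul hx0.le,
        hwn 4 (1 / 2 * (2 / 5)) (by norm_num)]
      gcongr
      calc (2 : ℝ) ^ (2 / 5 : ℝ) ≤ 2 ^ (1 : ℝ) := Real.rpow_le_rpow_of_exponent_le (by norm_num) (by norm_num)
        _ = 2 := Real.rpow_one 2
    have := key_small K w (Real.log x) (Real.log r) r (1 - 1 / r) α β hK1 hw1 (by linarith) hwl hr h rfl hvr hvc hα0.le hα2 hβ0.le hβ2
    rw [← e20, ← e15] at this
    rcases this with h1 | h1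
    · exact Or.inl (hT.trans h1)
    · exact Or.inr ⟨h, hT.trans h1⟩
  · left
    have hv2 : 1 / 2 ≤ Real.log r := by
      have h1 := Real.log_le_log (by norm_num) h.le
      have := Real.log_two_gt_d9
      linarith
    have hβ2 : β ≤ w ^ 6 := by
      have h1 : b ≤ x ^ (3 / 4 : ℝ) := by
        rw [← Real.log_le_log_iff hb0 (by positivity), hb, Real.log_mul (by positivity) hS0.ne', Real.log_rpow hr0, Real.log_sqrt hx0.le,
          Real.log_rpow hx0]
        nlinarith
      have h2 : β ≤ (x ^ (3 / 4 : ℝ)) ^ (2 / 5 : ℝ) := Real.rpow_le_rpow hb0.le h1 (by norm_num)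
      rwa [← Real.rpow_mul hx0.le, hwn 6 (3 / 4 * (2 / 5)) (by norm_num)] at h2
    have hα2 : Real.log r ≤ Real.log x / 4 → α ≤ 1 / w ^ 2 := by
      intro h1
      have h3 : w ^ 5 ≤ A := by
        refine le_trans ?_ hAS
        rw [le_div_iff₀ hr0, e10]
        have h4 : r ≤ w ^ 5 := by
          rw [← hwn 5 (1 / 4) (by norm_num), ← Real.log_le_log_iff hr0 (by positivity), Real.log_rpow hx0]; linarith
        calc w ^ 5 * r ≤ w ^ 5 * w ^ 5 := by gcongr
          _ = _ := by ring
      have h5 : α ≤ (w ^ 5) ^ (-(2 / 5) : ℝ) := Real.rpow_le_rpow_of_nonpos (by positivity) h3 (by norm_num)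
      refine h5.trans (le_of_eq ?_)
      rw [Real.rpow_neg (by positivity), ← Real.rpow_natCast, ← Real.rpow_mul hw0.le, one_div,
        show ((5 : ℕ) : ℝ) * (2 / 5) = ((2 : ℕ) : ℝ) by norm_num, Real.rpow_natCast]
    have := key_large K w (Real.log x) (Real.log r) r (1 - 1 / r) α β hK1 hw1 hl64 hwl h rfl hv2 hα0.le hα1 hα2 hβ0.le hβ2
    rw [← e20] at this
    exact hT.trans this

lemma exists_atil (N L U M E : ℝ) (hM : 0 < M) (hLU : L ≤ U) (hE : 0 ≤ E) (h1 : L * M - E ≤ N) (h2 : N ≤ U * M + E) :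
    ∃ a ∈ Set.Icc L U, |N - a * M| ≤ E := by
  rcases le_or_gt (N / M) L with h | h
  · refine ⟨L, ⟨le_rfl, hLU⟩, ?_⟩
    rw [div_le_iff₀ hM] at h
    rw [abs_le]; constructor <;> linarith
  · rcases le_or_gt (N / M) U with h' | h'
    · refine ⟨N / M, ⟨h.le, h'⟩, ?_⟩
      rw [div_mul_cancel₀ _ hM.ne', sub_self, abs_zero]; exact hE
    · refine ⟨U, ⟨hLU, le_rfl⟩, ?_⟩
      rw [lt_div_iff₀ hM] at h'
      rw [abs_le]; constructor <;> linarith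

lemma lower_alg (N T X l v s E F : ℝ) (hX : 0 < X) (hl : 6 ≤ l) (hv : 0 < v) (hvl : 2 * v ≤ l) (hs : 1 / 2 ≤ s)
    (hN : T ≤ N * (l ^ 2 / 4)) (hE : 0 ≤ E) (h : |T - X| ≤ X * v / l ∨ |T - X| ≤ E) (hF : E ≤ F) :
    4 * X / (l + 2 * s * v) ^ 2 - F ≤ N := by
  have hl0 : 0 < l := by linarith
  have h1 : 4 * X / (l + 2 * s * v) ^ 2 ≤ 4 * X / (l + v) ^ 2 := by
    gcongr; nlinarith
  have h2 : 4 * T / l ^ 2 ≤ N := by rw [div_le_iff₀ (by positivity)]; linarith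
  have h36 : 4 ≤ l ^ 2 := by nlinarith
  rcases h with h | h
  · have h3 := (abs_le.1 h).1
    have h4 : 4 * X / (l + v) ^ 2 ≤ 4 * (X - X * v / l) / l ^ 2 := by
      rw [div_le_div_iff₀ (by positivity) (by positivity)]
      have e : 4 * (X - X * v / l) * (l + v) ^ 2 = 4 * X * l ^ 2 + 4 * X * v * (l ^ 2 - l * v - v ^ 2) / l := by field_simp; ring
      have : 0 ≤ 4 * X * v * (l ^ 2 - l * v - v ^ 2) / l := by
        have : 0 ≤ l ^ 2 - l * v - v ^ 2 := by nlinarith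
        positivity
      linarith
    have h5 : 4 * (X - X * v / l) / l ^ 2 ≤ 4 * T / l ^ 2 := by gcongr; linarith
    linarith
  · have h3 := (abs_le.1 h).1
    have h4 : 4 * X / (l + v) ^ 2 ≤ 4 * X / l ^ 2 := by gcongr; linarith
    have h5 : 4 * (X - E) / l ^ 2 ≤ 4 * T / l ^ 2 := by gcongr; linarith
    have h6 : 4 * E / l ^ 2 ≤ E := by rw [div_le_iff₀ (by positivity)]; nlinarith
    have e : 4 * (X - E) / l ^ 2 = 4 * X / l ^ 2 - 4 * E / l ^ 2 := by ring
    linarith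

lemma upper_alg (N T X l v B E F : ℝ) (hX : 0 < X) (hl : 6 ≤ l) (hv : 0 < v) (hB : 0 < B) (hB2 : B ≤ l / 2 - v)
    (hN : N * (l / 2 * B) ≤ T) (hE : 0 ≤ E) (h : |T - X| ≤ X * v / l ∨ (1 ≤ B ∧ |T - X| ≤ E)) (hF : E ≤ F) :
    N ≤ X / B ^ 2 + F := by
  have hl0 : 0 < l := by linarith
  have h2 : N ≤ T / (l / 2 * B) := by rw [le_div_iff₀ (by positivity)]; exact hN
  rcases h with h | ⟨hB1, h⟩
  · have h3 := (abs_le.1 h).2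
    have h4 : T / (l / 2 * B) ≤ (X + X * v / l) / (l / 2 * B) := by gcongr; linarith
    have h5 : (X + X * v / l) / (l / 2 * B) ≤ X / B ^ 2 := by
      rw [div_le_div_iff₀ (by positivity) (by positivity)]
      have e : (X + X * v / l) * B ^ 2 = X * B * ((l + v) * B / l) := by field_simp
      have : (l + v) * B / l ≤ l / 2 := by
        rw [div_le_iff₀ hl0]; nlinarith
      rw [e]
      calc _ ≤ X * B * (l / 2) := by gcongr
        _ = _ := by ring
    linarith
  · have h3 := (abs_le.1 h).2
    have h4 : T / (l / 2 * B) ≤ (X + E) / (l / 2 * B) := by gcongr; linarith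
    have h5 : X / (l / 2 * B) ≤ X / B ^ 2 := by
      gcongr; nlinarith
    have h6 : E / (l / 2 * B) ≤ E := div_le_self hE (by nlinarith)
    rw [add_div] at h4
    linarith

/-- Theorem 4.9 of the paper (count of shifted algorithmic RSA integers, under RH). -/
theorem NALGV_asymptotics (hRH : RiemannHypothesis) :
    ∃ C : ℝ, 0 < C ∧ ∀ r x σ : ℝ, σ ∈ Set.Icc (0 : ℝ) 1 → 1 < r →
      2 * (1 + σ) * Real.log r < Real.log x → (2657 : ℝ) ≤ Real.sqrt x / r →
      ∃ atil ∈ Set.Icc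
          ((1 - 2 * max σ (1 - σ) * Real.log r
              / (Real.log x + 2 * max σ (1 - σ) * Real.log r)) ^ 2)
          ((1 + 2 * (1 + σ) * Real.log r
              / (Real.log x - 2 * (1 + σ) * Real.log r)) ^ 2),
        |(NALGV r σ x : ℝ)
            - atil * (4 * x / (Real.log x) ^ 2) * (Real.log r - Real.log r / r)|
          ≤ C * x ^ ((3 : ℝ) / 4) * r ^ ((1 : ℝ) / 2) := by
  obtain ⟨K0, hK01, hK0⟩ := theta_asymp hRH
  obtain ⟨K, hK⟩ : ∃ K, K = 10 * K0 ^ 2 := ⟨_, rfl⟩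
  have hK1 : 1 ≤ K := by rw [hK]; nlinarith
  have ev1 : ∀ᶠ x : ℝ in Filter.atTop, 64 * K ≤ Real.log x := Real.tendsto_log_atTop.eventually_ge_atTop _
  have ev2 : ∀ᶠ x : ℝ in Filter.atTop, 64 * K * Real.log x ≤ x ^ (1 / 10 : ℝ) := by
    have h := (isLittleO_log_rpow_atTop (show (0 : ℝ) < 1 / 10 by norm_num)).bound
      (show 0 < 1 / (64 * K) by positivity)
    filter_upwards [h, Filter.eventually_ge_atTop 1] with x hx hx1
    rw [Real.norm_eq_abs, Real.norm_eq_abs, abs_of_nonneg (Real.log_nonneg hx1), abs_of_nonneg (by positivity),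
      div_mul_eq_mul_div, one_mul, le_div_iff₀ (by positivity)] at hx
    linarith
  obtain ⟨x0, hx0⟩ := Filter.eventually_atTop.1 (ev1.and ev2)
  refine ⟨8 * K + 4 * |x0| + x0 ^ 2, by positivity, ?_⟩
  rintro r x σ ⟨hσ0, hσ1⟩ hr hl hSr
  have hr0 : 0 < r := by linarith
  have hS : 2657 ≤ Real.sqrt x := by
    rw [le_div_iff₀ hr0] at hSr; nlinarith
  have hx1 : 2657 ^ 2 ≤ x := by
    have := Real.sq_sqrt (show 0 ≤ x by
      by_contra h; rw [Real.sqrt_eq_zero_of_nonpos (by linarith)] at hS; norm_num at hS)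
    nlinarith
  have hxp : 0 < x := by linarith
  have hv : 0 < Real.log r := Real.log_pos hr
  have hl6 : 6 ≤ Real.log x := by
    have h1 : Real.log ((2 : ℝ) ^ 12) ≤ Real.log x := Real.log_le_log (by norm_num) (by norm_num at hx1 ⊢; linarith)
    rw [Real.log_pow] at h1
    have := Real.log_two_gt_d9
    push_cast at h1
    linarith
  have hc0 : 0 < 1 - 1 / r := by
    rw [sub_pos, div_lt_one hr0]; exact hr
  have hc1 : 1 - 1 / r ≤ 1 := by
    have : 0 < 1 / r := by positivity
    linarith
  have hs : 1 / 2 ≤ max σ (1 - σ) := by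
    rcases le_total σ (1 / 2) with h | h
    · exact le_max_of_le_right (by linarith)
    · exact le_max_of_le_left h
  obtain ⟨s, hsdef⟩ : ∃ s, s = max σ (1 - σ) := ⟨_, rfl⟩
  rw [← hsdef] at hs ⊢
  have hb : r ^ σ * Real.sqrt x ≤ x := by
    rw [← Real.log_le_log_iff (by positivity) hxp, Real.log_mul (by positivity) (by positivity), Real.log_rpow hr0, Real.log_sqrt hxp.le]
    nlinarith
  have hN := N_T_bounds r σ x hr hxp hσ0 hσ1 hl
  have hNt := N_triv r σ x hr (by linarith) hb
  have hTb := T_bound K0 hK01 hK0 r σ x hr hxp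
  rw [← hK] at hTb
  have hN0 : (0 : ℝ) ≤ NALGV r σ x := Nat.cast_nonneg _
  have hkey := T_key K hK1 r σ x hr hσ0 hσ1 hl (by linarith) (by linarith)
  replace hkey := fun h : x0 ≤ x => hkey (hx0 x h).1 (hx0 x h).2 hTb
  clear hTb
  generalize (NALGV r σ x : ℝ) = N at *
  generalize Tsum r σ x = T at *
  have hr12 : 1 ≤ r ^ ((1 : ℝ) / 2) := Real.one_le_rpow hr.le (by norm_num)
  have hx34 : 1 ≤ x ^ ((3 : ℝ) / 4) := Real.one_le_rpow (by linarith) (by norm_num)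
  have hlog2 : r ≤ 2 → Real.log r ≤ 1 := fun h => by
    have := Real.log_le_sub_one_of_pos hr0; linarith
  generalize Real.log r = v at *
  generalize Real.log x = l at *
  have hl0 : 0 < l := by linarith
  have hD : 0 < l - 2 * (1 + σ) * v := by linarith
  have hvl : 2 * v ≤ l := by nlinarith
  set X := x * (1 - 1 / r) * v with hX
  have hX0 : 0 < X := by positivity
  have hXx : X ≤ x * l := by
    calc X ≤ x * 1 * l := by rw [hX]; gcongr; linarith
      _ = _ := by ring
  set E := (8 * K + 4 * |x0| + x0 ^ 2) * x ^ ((3 : ℝ) / 4) * r ^ ((1 : ℝ) / 2) with hE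
  have hC0 : 0 < 8 * K + 4 * |x0| + x0 ^ 2 := by positivity
  have hE0 : 0 ≤ E := by positivity
  have hE1 : (8 * K + 4 * |x0| + x0 ^ 2) * x ^ ((3 : ℝ) / 4) ≤ E := le_mul_of_one_le_right (by positivity) hr12
  have hE2 : (8 * K + 4 * |x0| + x0 ^ 2) ≤ E := (le_mul_of_one_le_right hC0.le hx34).trans hE1
  have hE3 : 8 * K * x ^ ((3 : ℝ) / 4) ≤ E := by
    refine le_trans ?_ hE1
    gcongr
    have := abs_nonneg x0
    nlinarith
  have eL : (1 - 2 * s * v / (l + 2 * s * v)) ^ 2 * (4 * X / l ^ 2) = 4 * X / (l + 2 * s * v) ^ 2 := by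
    have : 0 < l + 2 * s * v := by positivity
    field_simp; ring
  have eU : (1 + 2 * (1 + σ) * v / (l - 2 * (1 + σ) * v)) ^ 2 * (4 * X / l ^ 2) = X / (l / 2 - (1 + σ) * v) ^ 2 := by
    have h2 : l / 2 - (1 + σ) * v = (l - 2 * (1 + σ) * v) / 2 := by ring
    rw [h2]
    generalize hd : l - 2 * (1 + σ) * v = d at *
    have h3 : 2 * (1 + σ) * v = l - d := by linarith
    rw [h3]
    field_simp; ring
  have hmain := exists_atil N ((1 - 2 * s * v / (l + 2 * s * v)) ^ 2) ((1 + 2 * (1 + σ) * v / (l - 2 * (1 + σ) * v)) ^ 2)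
    (4 * X / l ^ 2) E (by positivity) ?_ hE0 ?_ ?_
  · obtain ⟨a, ha, h⟩ := hmain
    refine ⟨a, ha, ?_⟩
    have e : a * (4 * x / l ^ 2) * (v - v / r) = a * (4 * X / l ^ 2) := by rw [hX]; ring
    rw [e]; exact h
  · have h1 : 1 - 2 * s * v / (l + 2 * s * v) ≤ 1 := by
      have : 0 ≤ 2 * s * v / (l + 2 * s * v) := by positivity
      linarith
    have h2 : 0 ≤ 1 - 2 * s * v / (l + 2 * s * v) := by
      rw [sub_nonneg, div_le_one (by positivity)]; linarith
    have h3 : 0 ≤ 2 * (1 + σ) * v / (l - 2 * (1 + σ) * v) := by positivity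
    gcongr
    linarith
  · rw [eL]
    rcases le_or_gt x0 x with hxx | hxx
    · refine lower_alg N T X l v s (8 * K * x ^ (3 / 4 : ℝ)) E hX0 hl6 hv hvl hs hN.1 (by positivity) ?_ hE3
      rcases hkey hxx with h | h
      · exact Or.inl h
      · exact Or.inr h.2
    · have h1 : 4 * X / (l + 2 * s * v) ^ 2 ≤ 4 * X / l ^ 2 := by
        gcongr
        have : 0 ≤ 2 * s * v := by positivity
        linarith
      have h2 : 4 * X / l ^ 2 ≤ 4 * x := by
        rw [div_le_iff₀ (by positivity)]
        have h4 : x * l * 1 ≤ x * l * l := mul_le_mul_of_nonneg_left (by linarith) (by positivity)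
        have h5 : 4 * x * l ^ 2 = 4 * (x * l * l) := by ring
        linarith
      have h3 := le_abs_self x0
      have h6 := sq_nonneg x0
      linarith
  · rw [eU]
    rcases le_or_gt x0 x with hxx | hxx
    · have hB3 : l / 2 - (1 + σ) * v ≤ l / 2 - v := by
        have : 0 ≤ σ * v := by positivity
        linarith
      refine upper_alg N T X l v (l / 2 - (1 + σ) * v) (8 * K * x ^ (3 / 4 : ℝ)) E hX0 hl6 hv (by linarith) hB3 hN.2 (by positivity) ?_ hE3
      rcases hkey hxx with h | h
      · exact Or.inl h
      · refine Or.inr ⟨?_, h.2⟩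
        have h1 := hlog2 h.1
        have h2 : (1 + σ) * v ≤ 2 * 1 := mul_le_mul (by linarith) h1 hv.le (by norm_num)
        linarith
    · have h1 : 0 ≤ X / (l / 2 - (1 + σ) * v) ^ 2 := by positivity
      have h3 := abs_nonneg x0
      have h4 : x * x ≤ x0 * x0 := mul_self_le_mul_self hxp.le hxx.le
      have h5 : x0 * x0 = x0 ^ 2 := by ring
      linarith
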